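/- arXiv:2010.08922 — 2 statements merged into one kernel-verified Lean document; each statement's English description precedes it below -/
import Mathlib

section
/- The second moment of the permanent of the random symmetric Rademacher matrix satisfies E[(per M_n)^2] ≤ n^{n+o(n)}; precisely, for every ε > 0 and all n sufficiently large with respect to ε, E[(per M_n)^2] ≤ n^{(1+ε)n}. -/
/-!
Expanding the square, `E[(per M)²]` is a sum over pairs `(σ, τ)` of permutations of the mean of
`∏ i, M i (σ i) * M i (τ i)`. Flipping the sign of one entry shows that this mean vanishes unless
every unordered pair `{a, b}` is used an even number of times by `σ` and `τ` together
(`sum_eq_zero`, `Compat`). For such a pair, `σ` and `τ` have the same set `S` of points lying on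
2-cycles, and outside `S` the value `τ i` is `σ i` or `σ⁻¹ i`.

It remains to count the compatible pairs. An involution is determined by its values on the larger
(or on the smaller) points of its 2-cycles, together with the set of these points. Hence `(σ, τ)` is
determined by three subsets of `Fin n` (the larger points of the 2-cycles of `σ`, those of `τ`, and
the set where `σ = τ`), the values of `σ` off the first set and the values of `τ` on the second.
The first two sets both have `|S| / 2` elements, so there are at most `8 ^ n * n ^ n` compatible
pairs (`card_compat_le`), and `8 ≤ n ^ ε` for large `n`.
-/

open Finset

/-- The real number (`1` or `-1`) associated to a Boolean: a Rademacher value. -/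
noncomputable def rad (b : Bool) : ℝ := if b then 1 else -1

/-- The permanent of a square real matrix. -/
noncomputable def perm {n : ℕ} (M : Matrix (Fin n) (Fin n) ℝ) : ℝ :=
  ∑ σ : Equiv.Perm (Fin n), ∏ i, M i (σ i)

/-- The symmetric `n × n` sign matrix determined by Boolean data `ω` (the entries on and
above the diagonal are `rad (ω i j)` for `i ≤ j`; below-diagonal entries are given by
symmetry). As `ω` ranges uniformly over all Boolean data, this is exactly the random
symmetric matrix `M_n` with i.i.d. Rademacher entries on and above the diagonal. -/
noncomputable def symMat (n : ℕ) (ω : Fin n → Fin n → Bool) : Matrix (Fin n) (Fin n) ℝ :=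
  fun i j => if i ≤ j then rad (ω i j) else rad (ω j i)

open Classical in
/-- The probability of the event `P` for the random symmetric Rademacher matrix `M_n`. -/
noncomputable def prob (n : ℕ) (P : Matrix (Fin n) (Fin n) ℝ → Prop) : ℝ :=
  ((univ.filter fun ω : Fin n → Fin n → Bool => P (symMat n ω)).card : ℝ) / 2 ^ (n * n)

namespace PerSecondMoment

/-! ### Parity condition for a nonzero mean -/

/-- The factor by which the `(i, j)` entry changes when the entry at `{a, b}` is negated. -/
noncomputable def flipSign {n : ℕ} (a b i j : Fin n) : ℝ :=
  if (i = a ∧ j = b) ∨ (i = b ∧ j = a) then -1 else 1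

/-- Negate the Boolean at position `(a, b)`. -/
def flip {n : ℕ} (a b : Fin n) (ω : Fin n → Fin n → Bool) : Fin n → Fin n → Bool :=
  fun i j => if i = a ∧ j = b then !(ω i j) else ω i j

lemma flip_involutive {n : ℕ} (a b : Fin n) : Function.Involutive (flip a b) := by
  intro ω
  funext i j
  by_cases h : i = a ∧ j = b <;> simp [flip, h]

lemma rad_not (b : Bool) : rad (!b) = -rad b := by
  cases b <;> simp [rad]

lemma symMat_flip {n : ℕ} {a b : Fin n} (hab : a ≤ b) (ω : Fin n → Fin n → Bool) (i j : Fin n) :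
    symMat n (flip a b ω) i j = flipSign a b i j * symMat n ω i j := by
  unfold symMat flip flipSign
  by_cases hij : i ≤ j
  · by_cases h : i = a ∧ j = b
    · simp [h, hab, rad_not]
    · have h' : ¬ (i = b ∧ j = a) := by
        rintro ⟨rfl, rfl⟩
        exact h ⟨le_antisymm hij hab, le_antisymm hab hij⟩
      simp [hij, h, h']
  · by_cases h : j = a ∧ i = b
    · have : ¬ b ≤ a := by rw [← h.1, ← h.2]; exact hij
      simp [h, this, rad_not]
    · have h' : ¬ (i = a ∧ j = b) := by
        rintro ⟨rfl, rfl⟩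
        exact hij hab
      have h'' : ¬ (i = b ∧ j = a) := fun h3 => h ⟨h3.2, h3.1⟩
      simp [hij, h, h', h'']

/-- The term of the expanded square of the permanent indexed by `(σ, τ)`. -/
noncomputable def term {n : ℕ} (σ τ : Equiv.Perm (Fin n)) (ω : Fin n → Fin n → Bool) : ℝ :=
  (∏ i, symMat n ω i (σ i)) * ∏ i, symMat n ω i (τ i)

lemma sum_eq_zero {n : ℕ} (σ τ : Equiv.Perm (Fin n)) {a b : Fin n} (hab : a ≤ b)
    (h : (∏ i, flipSign a b i (σ i)) * ∏ i, flipSign a b i (τ i) = -1) :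
    ∑ ω, term σ τ ω = 0 := by
  have h1 : ∑ ω, term σ τ (flip a b ω) = ∑ ω, term σ τ ω :=
    Equiv.sum_comp (flip_involutive a b).toPerm (term σ τ)
  have h2 : ∀ ω, term σ τ (flip a b ω) = - term σ τ ω := by
    intro ω
    unfold term
    simp only [symMat_flip hab, Finset.prod_mul_distrib]
    linear_combination ((∏ i, symMat n ω i (σ i)) * ∏ i, symMat n ω i (τ i)) * h
  simp only [h2, Finset.sum_neg_distrib] at h1
  linarith

lemma prod_flipSign_self {n : ℕ} (σ : Equiv.Perm (Fin n)) (a : Fin n) :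
    ∏ i, flipSign a a i (σ i) = if σ a = a then -1 else 1 := by
  rw [Finset.prod_eq_single a]
  · simp [flipSign]
  · intro i _ hi
    simp [flipSign, hi]
  · simp

lemma prod_flipSign {n : ℕ} (σ : Equiv.Perm (Fin n)) {a b : Fin n} (hab : a ≠ b) :
    ∏ i, flipSign a b i (σ i) =
      (if σ a = b then -1 else 1) * (if σ b = a then -1 else 1) := by
  rw [Finset.prod_eq_mul a b hab]
  · simp [flipSign, hab, hab.symm]
  · intro i _ hi
    simp [flipSign, hi.1, hi.2]
  · simp
  · simp

/-- Every unordered pair `{a, b}` is covered an even number of times by the pairs `{i, σ i}` and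
`{i, τ i}`. For `a ≠ b` the two sides of the equivalence say that the number of times `σ`,
respectively `τ`, covers `{a, b}` is even. -/
def Compat {n : ℕ} (σ τ : Equiv.Perm (Fin n)) : Prop :=
  (∀ a, σ a = a ↔ τ a = a) ∧
    ∀ a b, a ≠ b → ((σ a = b ↔ σ b = a) ↔ (τ a = b ↔ τ b = a))

lemma compat_of_sum_ne_zero {n : ℕ} (σ τ : Equiv.Perm (Fin n))
    (h : ∑ ω, term σ τ ω ≠ 0) : Compat σ τ := by
  have key : ∀ a b, a < b → ((σ a = b ↔ σ b = a) ↔ (τ a = b ↔ τ b = a)) := by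
    intro a b hab
    by_contra hc
    apply h
    apply sum_eq_zero σ τ hab.le
    rw [prod_flipSign σ hab.ne, prod_flipSign τ hab.ne]
    by_cases h1 : σ a = b <;> by_cases h2 : σ b = a <;> by_cases h3 : τ a = b <;>
      by_cases h4 : τ b = a <;> simp [h1, h2, h3, h4] at hc ⊢
  refine ⟨fun a => ?_, fun a b hab => ?_⟩
  · by_contra hc
    apply h
    apply sum_eq_zero σ τ (le_refl a)
    rw [prod_flipSign_self, prod_flipSign_self]
    by_cases h1 : σ a = a <;> by_cases h2 : τ a = a <;> simp [h1, h2] at hc ⊢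
  · rcases lt_or_gt_of_ne hab with h1 | h1
    · exact key a b h1
    · have := key b a h1
      tauto

lemma abs_symMat {n : ℕ} (ω : Fin n → Fin n → Bool) (i j : Fin n) : |symMat n ω i j| = 1 := by
  have : ∀ b, |rad b| = 1 := by intro b; cases b <;> simp [rad]
  unfold symMat
  split_ifs <;> exact this _

lemma term_le_one {n : ℕ} (σ τ : Equiv.Perm (Fin n)) (ω : Fin n → Fin n → Bool) :
    term σ τ ω ≤ 1 := by
  refine (le_abs_self _).trans ?_
  simp [term, abs_mul, Finset.abs_prod, abs_symMat]

/-! ### Counting compatible pairs -/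

/-- `i` lies on a 2-cycle of `σ`. -/
def InTwoCycle {n : ℕ} (σ : Equiv.Perm (Fin n)) (i : Fin n) : Prop :=
  σ (σ i) = i ∧ σ i ≠ i

/-- The set of larger points of the 2-cycles of `σ`. -/
def upper {n : ℕ} (σ : Equiv.Perm (Fin n)) : Finset (Fin n) :=
  univ.filter fun i => σ (σ i) = i ∧ σ i < i

lemma mem_upper {n : ℕ} {σ : Equiv.Perm (Fin n)} {i : Fin n} :
    i ∈ upper σ ↔ σ (σ i) = i ∧ σ i < i := by simp [upper]

lemma Compat.symm {n : ℕ} {σ τ : Equiv.Perm (Fin n)} (h : Compat σ τ) : Compat τ σ :=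
  ⟨fun a => (h.1 a).symm, fun a b hab => (h.2 a b hab).symm⟩

lemma Compat.apply_eq {n : ℕ} {σ τ : Equiv.Perm (Fin n)} (h : Compat σ τ) {i : Fin n}
    (hi : ¬ InTwoCycle τ i) : τ i = σ i ∨ σ (τ i) = i := by
  by_cases h1 : τ i = i
  · left; rw [h1, (h.1 i).2 h1]
  · have h2 := h.2 i (τ i) (Ne.symm h1)
    have h3 : τ (τ i) ≠ i := fun h3 => hi ⟨h3, h1⟩
    by_cases h4 : σ i = τ i
    · exact Or.inl h4.symm
    · right; tauto

lemma Compat.inTwoCycle {n : ℕ} {σ τ : Equiv.Perm (Fin n)} (h : Compat σ τ) {i : Fin n}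
    (hi : InTwoCycle τ i) : InTwoCycle σ i := by
  by_contra hc
  have h1 : σ i = τ i := by
    rcases h.symm.apply_eq hc with h1 | h1
    · exact h1
    · exact τ.injective (h1.trans hi.1.symm)
  have h2 := h.2 i (τ i) (Ne.symm hi.2)
  have h3 := hi.1
  refine hc ⟨?_, by rw [h1]; exact hi.2⟩
  rw [h1]; tauto

lemma Compat.inTwoCycle_iff {n : ℕ} {σ τ : Equiv.Perm (Fin n)} (h : Compat σ τ) (i : Fin n) :
    InTwoCycle σ i ↔ InTwoCycle τ i :=
  ⟨fun hi => h.symm.inTwoCycle hi, fun hi => h.inTwoCycle hi⟩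

open Classical in
/-- Each 2-cycle has exactly one larger point. -/
lemma two_mul_card_upper {n : ℕ} (σ : Equiv.Perm (Fin n)) :
    2 * (upper σ).card = (univ.filter (InTwoCycle σ)).card := by
  have hdisj : Disjoint (upper σ) ((upper σ).image σ) := by
    rw [Finset.disjoint_left]
    intro i hi hi'
    obtain ⟨j, hj, rfl⟩ := Finset.mem_image.1 hi'
    rw [mem_upper] at hi hj
    rw [hj.1] at hi
    exact lt_asymm hi.2 hj.2
  have hun : univ.filter (InTwoCycle σ) = upper σ ∪ (upper σ).image σ := by
    ext i
    simp only [Finset.mem_filter, Finset.mem_univ, true_and, Finset.mem_union, Finset.mem_image,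
      mem_upper]
    constructor
    · rintro ⟨h1, h2⟩
      rcases lt_or_gt_of_ne h2 with h3 | h3
      · exact Or.inl ⟨h1, h3⟩
      · exact Or.inr ⟨σ i, ⟨by rw [h1], by rw [h1]; exact h3⟩, h1⟩
    · rintro (⟨h1, h2⟩ | ⟨j, ⟨h1, h2⟩, rfl⟩)
      · exact ⟨h1, h2.ne⟩
      · exact ⟨by rw [h1], by rw [h1]; exact h2.ne'⟩
  rw [hun, Finset.card_union_of_disjoint hdisj, Finset.card_image_of_injective _ σ.injective]
  ring

lemma Compat.card_upper {n : ℕ} {σ τ : Equiv.Perm (Fin n)} (h : Compat σ τ) :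
    (upper σ).card = (upper τ).card := by
  classical
  have h1 := two_mul_card_upper σ
  have h2 := two_mul_card_upper τ
  have h3 : univ.filter (InTwoCycle σ) = univ.filter (InTwoCycle τ) :=
    Finset.filter_congr fun i _ => h.inTwoCycle_iff i
  rw [h3] at h1
  omega

/-- The image of a point of `upper σ` is its preimage under `σ`, which lies off `upper σ`; hence
`σ` is determined by its values off `upper σ`. -/
lemma eq_of_eq_off_upper {n : ℕ} {σ σ' : Equiv.Perm (Fin n)} (hu : upper σ = upper σ')
    (h : ∀ i, i ∉ upper σ → σ i = σ' i) : σ = σ' := by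
  ext1 i
  by_cases hi : i ∈ upper σ
  · have h1 := mem_upper.1 hi
    have h2 := mem_upper.1 (hu ▸ hi)
    have h3 : σ i ∉ upper σ := fun h3 => by
      have h4 := (mem_upper.1 h3).2
      rw [h1.1] at h4
      exact lt_asymm h4 h1.2
    have h5 := h _ h3
    rw [h1.1] at h5
    exact σ'.injective (h5.symm.trans h2.1.symm)
  · exact h i hi

/-- Given `σ`, a compatible `τ` is determined by its values on `upper τ` and the set where it
agrees with `σ`. -/
lemma eq_of_eq_on_upper {n : ℕ} {σ τ τ' : Equiv.Perm (Fin n)} (hc : Compat σ τ)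
    (hc' : Compat σ τ') (hu : upper τ = upper τ') (hb : ∀ i, τ i = σ i ↔ τ' i = σ i)
    (h : ∀ i ∈ upper τ, τ i = τ' i) : τ = τ' := by
  ext1 i
  by_cases hi : InTwoCycle τ i
  · by_cases hiu : i ∈ upper τ
    · exact h i hiu
    · have h1 : i < τ i := by
        rcases lt_or_gt_of_ne hi.2 with h1 | h1
        · exact absurd (mem_upper.2 ⟨hi.1, h1⟩) hiu
        · exact h1
      have h2 : τ i ∈ upper τ := mem_upper.2 ⟨by rw [hi.1], by rw [hi.1]; exact h1⟩
      have h3 := h _ h2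
      have h4 := mem_upper.1 (hu ▸ h2)
      rw [hi.1] at h3
      rw [← h3] at h4
      exact h4.1.symm
  · have hi' : ¬ InTwoCycle τ' i := by
      rwa [← hc'.inTwoCycle_iff, hc.inTwoCycle_iff]
    by_cases hs : τ i = σ i
    · rw [hs, (hb i).1 hs]
    · have hs' : τ' i ≠ σ i := fun h' => hs ((hb i).2 h')
      have h1 := (hc.apply_eq hi).resolve_left hs
      have h2 := (hc'.apply_eq hi').resolve_left hs'
      exact σ.injective (h1.trans h2.symm)

open Classical in
lemma card_compat_le (n : ℕ) :
    (univ.filter fun p : Equiv.Perm (Fin n) × Equiv.Perm (Fin n) => Compat p.1 p.2).card ≤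
      n ^ n * 8 ^ n := by
  set s := univ.filter fun p : Equiv.Perm (Fin n) × Equiv.Perm (Fin n) => Compat p.1 p.2 with hs
  let f : Equiv.Perm (Fin n) × Equiv.Perm (Fin n) →
      Finset (Fin n) × Finset (Fin n) × Finset (Fin n) :=
    fun p => (upper p.1, upper p.2, univ.filter fun i => p.2 i = p.1 i)
  have hfib : ∀ a ∈ s.image f, (s.filter fun x => f x = a).card ≤ n ^ n := by
    intro a ha
    obtain ⟨q, hq, rfl⟩ := Finset.mem_image.1 ha
    have hq : Compat q.1 q.2 := by simpa [hs] using hq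
    -- Off the first set and on the second there are `n` free values altogether.
    have hcard : Fintype.card (((upper q.1)ᶜ : Finset (Fin n)) → Fin n) *
        Fintype.card ((upper q.2 : Finset (Fin n)) → Fin n) = n ^ n := by
      simp only [Fintype.card_fun, Fintype.card_coe, Fintype.card_fin, Finset.card_compl]
      rw [← pow_add]
      congr 1
      have h1 := hq.card_upper
      have h2 := Finset.card_le_univ (upper q.1)
      simp only [Fintype.card_fin] at h2
      omega
    rw [← hcard, ← Fintype.card_prod, ← Finset.card_univ]
    refine Finset.card_le_card_of_injOn
      (fun p => ((fun i => p.1 i.1), (fun i => p.2 i.1))) (fun _ _ => by simp) ?_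
    rintro ⟨σ, τ⟩ hp ⟨σ', τ'⟩ hp' heq
    simp only [hs, f, Finset.coe_filter, Finset.mem_filter, Finset.mem_univ, true_and,
      Set.mem_ofPred_eq, Prod.mk.injEq] at hp hp' heq
    obtain ⟨hc, hu, hv, hb⟩ := hp
    obtain ⟨hc', hu', hv', hb'⟩ := hp'
    obtain ⟨e1, e2⟩ := heq
    have hσ : σ = σ' := by
      refine eq_of_eq_off_upper (hu.trans hu'.symm) fun i hi => ?_
      exact congrFun e1 ⟨i, by rw [Finset.mem_compl, ← hu]; exact hi⟩
    subst hσ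
    have hτ : τ = τ' := by
      refine eq_of_eq_on_upper hc hc' (hv.trans hv'.symm) (fun i => ?_) fun i hi => ?_
      · have := Finset.ext_iff.1 (hb.trans hb'.symm) i
        simpa using this
      · exact congrFun e2 ⟨i, by rw [← hv]; exact hi⟩
    rw [hτ]
  refine (Finset.card_le_mul_card_image s _ hfib).trans ?_
  refine Nat.mul_le_mul_left _ ((Finset.card_le_univ _).trans ?_)
  simp only [Fintype.card_prod, Fintype.card_finset, Fintype.card_fin]
  rw [← mul_pow, ← mul_pow]
  norm_num

/-! ### The second moment -/

lemma sum_perm_sq_le (n : ℕ) :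
    ∑ ω : Fin n → Fin n → Bool, perm (symMat n ω) ^ 2 ≤ 2 ^ (n * n) * ((n : ℝ) ^ n * 8 ^ n) := by
  classical
  have h1 : ∀ ω : Fin n → Fin n → Bool, perm (symMat n ω) ^ 2 =
      ∑ p : Equiv.Perm (Fin n) × Equiv.Perm (Fin n), term p.1 p.2 ω := by
    intro ω
    rw [sq, perm, Finset.sum_mul_sum, Fintype.sum_prod_type]
    rfl
  simp only [h1]
  rw [Finset.sum_comm]
  have h2 : ∀ p : Equiv.Perm (Fin n) × Equiv.Perm (Fin n),
      ∑ ω, term p.1 p.2 ω ≤ if Compat p.1 p.2 then (2 : ℝ) ^ (n * n) else 0 := by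
    intro p
    split_ifs with hc
    · refine (Finset.sum_le_sum fun ω _ => term_le_one p.1 p.2 ω).trans ?_
      simp [pow_mul]
    · by_contra h
      exact hc (compat_of_sum_ne_zero _ _ fun h0 => h h0.le)
  refine (Finset.sum_le_sum fun p _ => h2 p).trans ?_
  rw [← Finset.sum_filter, Finset.sum_const, nsmul_eq_mul, mul_comm]
  have h3 := card_compat_le n
  gcongr
  exact_mod_cast h3

end PerSecondMoment

/-- The second moment of the permanent of the random symmetric Rademacher matrix satisfies
`E[(per M_n)^2] ≤ n^((1+ε)n)` for every `ε > 0` and all sufficiently large `n`. Here the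
expectation is written as the average over all Boolean data `ω`. -/
theorem per_second_moment (ε : ℝ) (hε : 0 < ε) :
    ∃ n₀ : ℕ, ∀ n : ℕ, n₀ ≤ n →
      (∑ ω : Fin n → Fin n → Bool, perm (symMat n ω) ^ 2) / 2 ^ (n * n) ≤
        (n : ℝ) ^ ((1 + ε) * (n : ℝ)) := by
  have hev : ∀ᶠ n : ℕ in Filter.atTop, (8 : ℝ) ≤ (n : ℝ) ^ ε :=
    ((tendsto_rpow_atTop hε).comp tendsto_natCast_atTop_atTop).eventually_ge_atTop 8
  obtain ⟨N, hN⟩ := Filter.eventually_atTop.1 hev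
  refine ⟨max N 1, fun n hn => ?_⟩
  have h8 := hN n (le_of_max_le_left hn)
  have hpos : (0 : ℝ) < n := by exact_mod_cast le_of_max_le_right hn
  rw [div_le_iff₀ (by positivity), mul_comm _ ((2 : ℝ) ^ (n * n))]
  refine (PerSecondMoment.sum_perm_sq_le n).trans ?_
  have h : (n : ℝ) ^ ((1 + ε) * (n : ℝ)) = (n : ℝ) ^ n * ((n : ℝ) ^ ε) ^ n := by
    rw [add_mul, one_mul, Real.rpow_add hpos, Real.rpow_natCast, Real.rpow_mul hpos.le,
      Real.rpow_natCast]
  rw [h]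
  gcongr
end

section
/- There is a positive constant c > 0 such that for every ε > 0 the following holds. Let n be sufficiently large with respect to ε, let L = ⌊(log n)/10⌋, and let X and Y be disjoint subsets of {1,…,n} with |X| = L and |Y| = 3L. Then with probability at least 1 − (1/4)·n^{-c} there is a set B with |B| = n − L and {1,…,n} \ Y ⊆ B ⊆ {1,…,n} such that the submatrix M_n[{1,…,n} \ X, B] is n^{(1−ε)n/2}-heavy. -/
/-!
The indices are revealed one at a time. When the index `x` is revealed, row and column `x` of the
symmetric matrix receive fresh random signs, while the entries among earlier indices stay fixed
(`matAvg_setRow`). A potential function of the best available minor is followed, and `run` turns a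
one-step estimate on it into a bound on its expectation. The index set is split as
`X ⊔ W ⊔ F₁ ⊔ F₂ ⊔ F₃ ⊔ Y`, where `W`, `F₂`, `F₃` have sizes equal to small multiples of `n`, and the
blocks are revealed in this order.

*Growth* (`growth_phase`). Let `gam M P A` be the sum of squares of all permanents with row set `A`
and columns in `P`. Adding a row `x` replaces the vector of these permanents by a Rademacher sum of
vectors, many of which have comparable norms, so a small-ball estimate in Hilbert space
(`small_ball`) shows that `gam` is multiplied by a constant multiple of `n`, outside an event whose
probability is as small a constant as desired. Hence all but a small proportion of the rows of `F₁`
can be used, and pigeonhole over the `2 ^ n` column sets gives one minor whose permanent is at least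
`n ^ ((1 - ε) n / 2) * 2 ^ n`.

From here on a single minor `(A, B)` is followed, and its permanent loses at most a factor `2` for
each revealed index.

*Columns* (`cols_phase`). Along `F₂` the columns which are neither in `X` nor in `A` are turned into
rows. The permanent with a new row and column is a quadratic form in the new signs, and it reaches
any one of its off-diagonal coefficients with probability at least `1/4` (`quad_fail`). Afterwards
`B ⊆ A ∪ X`, and then there are exactly `|X|` free columns in `A ∪ X`.

*Rows* (`rows_phase`). A new row can be completed by one of the `|X|` free columns, except with
probability `2 ^ (-|X|)`, and with probability about `1/2` an older missing row is absorbed too, in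
the new column. So after `F₃` the number of missing rows has a bounded exponential moment.

*Last rows* (`last_phase`). The same moves along the `3|X|` rows of `Y` finish the row set, and bring
the free columns into `Y`: each new row uses up a prescribed free column outside `Y` with probability
at least `1/2`. The failure probability is `O(|X| (125/144) ^ |X|)`, a negative power of `n`.
-/

open Finset

/-- The permanent of the submatrix of `M` with row set `A` and column set `B`,
defined as a sum over all bijections between `A` and `B` (it equals `0` if
`A.card ≠ B.card`). Since the permanent is invariant under row and column
permutations, this faithfully represents `per M[A,B]`. -/
noncomputable def permOn {m n : ℕ} (M : Matrix (Fin m) (Fin n) ℝ)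
    (A : Finset (Fin m)) (B : Finset (Fin n)) : ℝ :=
  ∑ σ : {x // x ∈ A} ≃ {y // y ∈ B}, ∏ i : {x // x ∈ A}, M i.1 (σ i).1

/-! ### Permanents of submatrices -/

lemma permOn_eq_of_equiv {m n : ℕ} (M : Matrix (Fin m) (Fin n) ℝ)
    (A : Finset (Fin m)) (B : Finset (Fin n)) {β : Type} [Fintype β] [DecidableEq β]
    (e : β ≃ {y // y ∈ B}) :
    permOn M A B = ∑ σ : {x // x ∈ A} ≃ β, ∏ i : {x // x ∈ A}, M i.1 (e (σ i)).1 := by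
  unfold permOn
  refine (Fintype.sum_equiv (Equiv.equivCongr (Equiv.refl _) e) _ _ ?_).symm
  intro σ
  rfl

lemma permOn_eq_zero {m n : ℕ} (M : Matrix (Fin m) (Fin n) ℝ)
    {A : Finset (Fin m)} {B : Finset (Fin n)} (h : A.card ≠ B.card) : permOn M A B = 0 := by
  unfold permOn
  have : IsEmpty ({x // x ∈ A} ≃ {y // y ∈ B}) := by
    refine ⟨fun e => h ?_⟩
    simpa using Fintype.card_congr e
  simp

lemma permOn_empty {m n : ℕ} (M : Matrix (Fin m) (Fin n) ℝ) : permOn M ∅ ∅ = 1 := by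
  unfold permOn
  simp
  rw [Fintype.card_eq_one_iff]
  exact ⟨Equiv.refl _ |>.trans (Equiv.equivOfIsEmpty _ _), fun y => by ext i; exact absurd i.2 (by simp)⟩

/-- Laplace expansion of the permanent along a row. -/
lemma permOn_insert_row {m n : ℕ} (M : Matrix (Fin m) (Fin n) ℝ)
    {A : Finset (Fin m)} (B : Finset (Fin n)) {x : Fin m} (hx : x ∉ A) :
    permOn M (insert x A) B = ∑ b ∈ B, M x b * permOn M A (B.erase b) := by
  classical
  let e0 : {z // z ∈ insert x A} ≃ Option {z // z ∈ A} := subtypeInsertEquivOption hx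
  have h1 : permOn M (insert x A) B = ∑ σ : Option {z // z ∈ A} ≃ {y // y ∈ B},
      M x (σ none).1 * ∏ i : {z // z ∈ A}, M i.1 (σ (some i)).1 := by
    unfold permOn
    refine (Fintype.sum_equiv (Equiv.equivCongr e0.symm (Equiv.refl _)) _ _ ?_).symm
    intro σ
    rw [← Equiv.prod_comp e0.symm, Fintype.prod_option]
    simp only [Equiv.equivCongr_apply_apply, Equiv.symm_symm, Equiv.apply_symm_apply, Equiv.refl_apply]
    rfl
  rw [h1, ← Finset.sum_coe_sort B, ← Fintype.sum_fiberwise (fun σ : Option {z // z ∈ A} ≃ {y // y ∈ B} => σ none)]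
  refine Fintype.sum_congr _ _ fun b => ?_
  let e1 : {y : {y // y ∈ B} // y ≠ b} ≃ {y // y ∈ B.erase b.1} :=
    { toFun := fun y => ⟨y.1.1, by
        rw [mem_erase]; exact ⟨fun h => y.2 (Subtype.ext h), y.1.2⟩⟩
      invFun := fun y => ⟨⟨y.1, (mem_erase.1 y.2).2⟩, fun h => (mem_erase.1 y.2).1 (congrArg Subtype.val h)⟩
      left_inv := fun y => rfl
      right_inv := fun y => rfl }
  rw [permOn_eq_of_equiv M A (B.erase b.1) e1, Finset.mul_sum]
  refine Fintype.sum_equiv (Equiv.optionSubtype b) _ _ ?_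
  rintro ⟨σ, hσ⟩
  subst hσ
  rfl

lemma permOn_transpose {m n : ℕ} (M : Matrix (Fin m) (Fin n) ℝ)
    (A : Finset (Fin m)) (B : Finset (Fin n)) :
    permOn M.transpose B A = permOn M A B := by
  unfold permOn
  refine Fintype.sum_equiv ⟨Equiv.symm, Equiv.symm, fun _ => rfl, fun _ => rfl⟩ _ _ ?_
  intro σ
  rw [← Equiv.prod_comp σ.symm]
  simp [Matrix.transpose_apply]

lemma permOn_insert_col {m n : ℕ} (M : Matrix (Fin m) (Fin n) ℝ)
    (A : Finset (Fin m)) {B : Finset (Fin n)} {x : Fin n} (hx : x ∉ B) :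
    permOn M A (insert x B) = ∑ a ∈ A, M a x * permOn M (A.erase a) B := by
  rw [← permOn_transpose, permOn_insert_row _ _ hx]
  refine Finset.sum_congr rfl fun a _ => ?_
  rw [permOn_transpose, Matrix.transpose_apply]

lemma permOn_congr {m n : ℕ} {M N : Matrix (Fin m) (Fin n) ℝ}
    {A : Finset (Fin m)} {B : Finset (Fin n)} (h : ∀ i ∈ A, ∀ j ∈ B, M i j = N i j) :
    permOn M A B = permOn N A B := by
  unfold permOn
  refine Finset.sum_congr rfl fun σ _ => Finset.prod_congr rfl fun i _ => ?_
  exact h _ i.2 _ (σ i).2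

/-- The matrix obtained from `M` by writing the vector `v` into row `x` and into column `x`. -/
def setRow {n : ℕ} (M : Matrix (Fin n) (Fin n) ℝ) (x : Fin n) (v : Fin n → ℝ) :
    Matrix (Fin n) (Fin n) ℝ :=
  fun i j => if i = x then v j else if j = x then v i else M i j

section setRow
variable {n : ℕ} (M : Matrix (Fin n) (Fin n) ℝ) {x : Fin n} (v : Fin n → ℝ)
  {A B : Finset (Fin n)}

lemma permOn_setRow (hA : x ∉ A) (hB : x ∉ B) :
    permOn (setRow M x v) A B = permOn M A B := by
  refine permOn_congr fun i hi j hj => ?_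
  have h1 : i ≠ x := fun h => hA (h ▸ hi)
  have h2 : j ≠ x := fun h => hB (h ▸ hj)
  simp [setRow, h1, h2]

lemma permOn_setRow_row (hA : x ∉ A) (hB : x ∉ B) :
    permOn (setRow M x v) (insert x A) B = ∑ b ∈ B, v b * permOn M A (B.erase b) := by
  rw [permOn_insert_row _ _ hA]
  refine Finset.sum_congr rfl fun b _ => ?_
  rw [permOn_setRow M v hA (fun h => hB (mem_of_mem_erase h))]
  simp [setRow]

lemma permOn_setRow_both (hA : x ∉ A) (hB : x ∉ B) :
    permOn (setRow M x v) (insert x A) (insert x B) = v x * permOn M A B +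
      ∑ q ∈ B, ∑ p ∈ A, v q * v p * permOn M (A.erase p) (B.erase q) := by
  rw [permOn_insert_row _ _ hA, Finset.sum_insert hB, erase_insert hB, permOn_setRow M v hA hB]
  congr 1
  · simp [setRow]
  · refine Finset.sum_congr rfl fun q hq => ?_
    have hqx : q ≠ x := fun h => hB (h ▸ hq)
    have hx' : x ∉ B.erase q := fun h => hB (mem_of_mem_erase h)
    rw [erase_insert_of_ne hqx.symm, permOn_insert_col _ _ hx', Finset.mul_sum]
    refine Finset.sum_congr rfl fun p hp => ?_
    have hpx : p ≠ x := fun h => hA (h ▸ hp)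
    rw [permOn_setRow M v (fun h => hA (mem_of_mem_erase h)) hx']
    simp [setRow, hpx, mul_assoc]

end setRow

/-! ### Averages over sign patterns -/

open Classical in
/-- The `0`/`1`-valued indicator of a proposition. -/
noncomputable def ind (p : Prop) : ℝ := if p then 1 else 0

lemma ind_true {p : Prop} (h : p) : ind p = 1 := by simp [ind, h]
lemma ind_false {p : Prop} (h : ¬ p) : ind p = 0 := by simp [ind, h]
lemma ind_nonneg (p : Prop) : 0 ≤ ind p := by unfold ind; split_ifs <;> norm_num
lemma ind_le_one (p : Prop) : ind p ≤ 1 := by unfold ind; split_ifs <;> norm_num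

/-- The average of `f` over all sign patterns `ξ : Fin n → Bool`. -/
noncomputable def signAvg {n : ℕ} (f : (Fin n → Bool) → ℝ) : ℝ := (∑ ξ, f ξ) / 2 ^ n

/-- The `±1` vector of a sign pattern. -/
noncomputable def sv {n : ℕ} (ξ : Fin n → Bool) : Fin n → ℝ := fun j => rad (ξ j)

/-- Flip the signs of `ξ` at the positions in `F`. -/
def flipOn {n : ℕ} (F : Finset (Fin n)) (ξ : Fin n → Bool) : Fin n → Bool :=
  fun j => if j ∈ F then !ξ j else ξ j

section avg
variable {n : ℕ}

lemma signAvg_mono {f g : (Fin n → Bool) → ℝ} (h : ∀ ξ, f ξ ≤ g ξ) : signAvg f ≤ signAvg g := by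
  unfold signAvg
  have := Finset.sum_le_sum (fun ξ (_ : ξ ∈ (univ : Finset (Fin n → Bool))) => h ξ)
  gcongr

lemma signAvg_const (c : ℝ) : signAvg (fun _ : Fin n → Bool => c) = c := by
  unfold signAvg
  simp

lemma signAvg_add (f g : (Fin n → Bool) → ℝ) :
    signAvg (fun ξ => f ξ + g ξ) = signAvg f + signAvg g := by
  unfold signAvg
  rw [Finset.sum_add_distrib, add_div]

lemma signAvg_mul (c : ℝ) (f : (Fin n → Bool) → ℝ) :
    signAvg (fun ξ => c * f ξ) = c * signAvg f := by
  unfold signAvg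
  rw [← Finset.mul_sum, mul_div_assoc]

lemma signAvg_sum {ι : Type*} (s : Finset ι) (f : ι → (Fin n → Bool) → ℝ) :
    signAvg (fun ξ => ∑ i ∈ s, f i ξ) = ∑ i ∈ s, signAvg (f i) := by
  unfold signAvg
  rw [Finset.sum_comm, Finset.sum_div]

lemma signAvg_nonneg {f : (Fin n → Bool) → ℝ} (h : ∀ ξ, 0 ≤ f ξ) : 0 ≤ signAvg f := by
  unfold signAvg
  have := Finset.sum_nonneg (fun ξ (_ : ξ ∈ (univ : Finset (Fin n → Bool))) => h ξ)
  positivity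

lemma flipOn_flipOn (F : Finset (Fin n)) (ξ : Fin n → Bool) : flipOn F (flipOn F ξ) = ξ := by
  funext j
  unfold flipOn
  split_ifs <;> simp

lemma signAvg_flip (F : Finset (Fin n)) (f : (Fin n → Bool) → ℝ) :
    signAvg (fun ξ => f (flipOn F ξ)) = signAvg f := by
  unfold signAvg
  congr 1
  exact Fintype.sum_equiv ⟨flipOn F, flipOn F, flipOn_flipOn F, flipOn_flipOn F⟩ _ _ fun _ => rfl

lemma rad_not (b : Bool) : rad (!b) = - rad b := by cases b <;> simp [rad]
lemma rad_mul_self (b : Bool) : rad b * rad b = 1 := by cases b <;> simp [rad]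
lemma abs_rad (b : Bool) : |rad b| = 1 := by cases b <;> simp [rad]

lemma sv_flip_mem {F : Finset (Fin n)} {j : Fin n} (h : j ∈ F) (ξ : Fin n → Bool) :
    sv (flipOn F ξ) j = - sv ξ j := by simp [sv, flipOn, h, rad_not]

lemma sv_flip_not_mem {F : Finset (Fin n)} {j : Fin n} (h : j ∉ F) (ξ : Fin n → Bool) :
    sv (flipOn F ξ) j = sv ξ j := by simp [sv, flipOn, h]

/-- The pattern equal to `ξ` on `J` and to `ζ` off `J`. -/
def mix (J : Finset (Fin n)) (ξ ζ : Fin n → Bool) : Fin n → Bool :=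
  fun j => if j ∈ J then ξ j else ζ j

/-- Resampling the coordinates in `J` does not change the average. -/
lemma signAvg_mix (J : Finset (Fin n)) (f : (Fin n → Bool) → ℝ) :
    signAvg (fun ζ => signAvg fun ξ => f (mix J ξ ζ)) = signAvg f := by
  have hinv : ∀ p : (Fin n → Bool) × (Fin n → Bool),
      (mix J (mix J p.1 p.2) (mix J p.2 p.1), mix J (mix J p.2 p.1) (mix J p.1 p.2)) = p := by
    rintro ⟨a, b⟩
    ext j <;> simp only [mix] <;> split_ifs <;> rfl
  have h : ∑ p : (Fin n → Bool) × (Fin n → Bool), f (mix J p.1 p.2) =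
      ∑ p : (Fin n → Bool) × (Fin n → Bool), f p.1 :=
    Fintype.sum_equiv (Equiv.mk (α := (Fin n → Bool) × (Fin n → Bool))
      (β := (Fin n → Bool) × (Fin n → Bool)) (fun p => (mix J p.1 p.2, mix J p.2 p.1))
      (fun p => (mix J p.1 p.2, mix J p.2 p.1)) hinv hinv) _ _ fun _ => rfl
  rw [Fintype.sum_prod_type, Fintype.sum_prod_type_right] at h
  unfold signAvg
  rw [← Finset.sum_div, Finset.sum_comm, h]
  simp

/-- If flipping any nonempty part of `D` turns a bad pattern into a good one, then the bad patterns
have density at most `2 ^ (-|D|)`. -/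
lemma signAvg_ind_flip_le (D : Finset (Fin n)) (bad : (Fin n → Bool) → Prop)
    (h : ∀ ξ, bad ξ → ∀ F ⊆ D, F.Nonempty → ¬ bad (flipOn F ξ)) :
    signAvg (fun ξ => ind (bad ξ)) ≤ (1 / 2) ^ D.card := by
  have h1 : ∀ ξ, ∑ F ∈ D.powerset, ind (bad (flipOn F ξ)) ≤ 1 := by
    intro ξ
    by_cases hex : ∃ F ∈ D.powerset, bad (flipOn F ξ)
    · obtain ⟨F, hF, hb⟩ := hex
      rw [Finset.sum_eq_single_of_mem F hF]
      · exact ind_le_one _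
      · intro F' hF' hne
        apply ind_false
        have hsd : flipOn F' ξ = flipOn (symmDiff F F') (flipOn F ξ) := by
          funext j
          simp only [flipOn, mem_symmDiff]
          by_cases h1 : j ∈ F <;> by_cases h2 : j ∈ F' <;> simp [h1, h2]
        rw [hsd]
        refine h _ hb _ ?_ ?_
        · intro j hj
          rw [mem_powerset] at hF hF'
          rcases mem_symmDiff.1 hj with hj | hj
          · exact hF hj.1
          · exact hF' hj.1
        · rw [Finset.nonempty_iff_ne_empty]
          intro h0
          exact hne (symmDiff_eq_bot.1 h0).symm
    · push Not at hex
      rw [Finset.sum_eq_zero fun F hF => ind_false (hex F hF)]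
      norm_num
  have h2 := signAvg_mono h1
  rw [signAvg_const, signAvg_sum] at h2
  rw [Finset.sum_congr rfl fun F _ => signAvg_flip F (fun ξ => ind (bad ξ))] at h2
  simp only [sum_const, card_powerset, nsmul_eq_mul, Nat.cast_pow, Nat.cast_ofNat] at h2
  rw [one_div, inv_pow, ← one_div, le_div_iff₀ (by positivity)]
  linarith

/-- A pattern of four flips cannot consist of bad patterns only, so at most three quarters of all
patterns are bad. -/
lemma signAvg_ind_four_le (F₁ F₂ F₃ : Finset (Fin n)) (bad : (Fin n → Bool) → Prop)
    (h : ∀ ξ, bad ξ → bad (flipOn F₁ ξ) → bad (flipOn F₂ ξ) → ¬ bad (flipOn F₃ ξ)) :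
    signAvg (fun ξ => ind (bad ξ)) ≤ 3 / 4 := by
  have h1 : ∀ ξ, ind (bad ξ) + ind (bad (flipOn F₁ ξ)) + ind (bad (flipOn F₂ ξ)) +
      ind (bad (flipOn F₃ ξ)) ≤ 3 := by
    intro ξ
    have := h ξ
    unfold ind
    split_ifs <;> first | (exfalso; tauto) | norm_num
  have h2 := signAvg_mono h1
  rw [signAvg_const, signAvg_add, signAvg_add, signAvg_add, signAvg_flip F₁ (fun ξ => ind (bad ξ)),
    signAvg_flip F₂ (fun ξ => ind (bad ξ)), signAvg_flip F₃ (fun ξ => ind (bad ξ))] at h2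
  linarith

end avg

/-! ### Small balls for Rademacher sums in Hilbert space -/

section smallBall
variable {n : ℕ} {H : Type*} [NormedAddCommGroup H] [InnerProductSpace ℝ H]

/-- The Rademacher sum `∑_{t ∈ J} ξ_t v_t`. -/
noncomputable def rsum (v : Fin n → H) (J : Finset (Fin n)) (ξ : Fin n → Bool) : H :=
  ∑ t ∈ J, sv ξ t • v t

lemma rsum_insert (v : Fin n → H) {J : Finset (Fin n)} {t : Fin n} (ht : t ∉ J)
    (ξ : Fin n → Bool) : rsum v (insert t J) ξ = sv ξ t • v t + rsum v J ξ := by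
  unfold rsum; rw [Finset.sum_insert ht]

lemma rsum_flip_not_mem (v : Fin n → H) {J : Finset (Fin n)} {t : Fin n} (ht : t ∉ J)
    (ξ : Fin n → Bool) : rsum v J (flipOn {t} ξ) = rsum v J ξ := by
  unfold rsum
  refine Finset.sum_congr rfl fun s hs => ?_
  rw [sv_flip_not_mem]
  simp only [mem_singleton]
  rintro rfl
  exact ht hs

lemma rsum_second_moment (v : Fin n → H) (J : Finset (Fin n)) :
    signAvg (fun ξ => ‖rsum v J ξ‖ ^ 2) = ∑ t ∈ J, ‖v t‖ ^ 2 := by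
  induction J using Finset.induction_on with
  | empty => simp [rsum, signAvg]
  | insert t J ht ih =>
    have key : ∀ ξ, ‖rsum v (insert t J) ξ‖ ^ 2 + ‖rsum v (insert t J) (flipOn {t} ξ)‖ ^ 2 =
        2 * ‖rsum v J ξ‖ ^ 2 + 2 * ‖v t‖ ^ 2 := by
      intro ξ
      rw [rsum_insert v ht, rsum_insert v ht, rsum_flip_not_mem v ht, sv_flip_mem (by simp)]
      have hn : ‖sv ξ t • v t‖ = ‖v t‖ := by
        rw [norm_smul, Real.norm_eq_abs, sv, abs_rad, one_mul]
      rw [neg_smul, norm_add_sq_real, norm_add_sq_real, norm_neg, inner_neg_left, hn]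
      ring
    have h2 : signAvg (fun ξ => ‖rsum v (insert t J) ξ‖ ^ 2) +
        signAvg (fun ξ => ‖rsum v (insert t J) (flipOn {t} ξ)‖ ^ 2) =
        2 * signAvg (fun ξ => ‖rsum v J ξ‖ ^ 2) + 2 * ‖v t‖ ^ 2 := by
      rw [← signAvg_add, ← signAvg_mul, ← signAvg_const (n := n) (2 * ‖v t‖ ^ 2), ← signAvg_add]
      congr 1
      funext ξ
      exact key ξ
    rw [signAvg_flip {t} (fun ξ => ‖rsum v (insert t J) ξ‖ ^ 2), ih] at h2
    rw [Finset.sum_insert ht]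
    linarith

lemma rsum_fourth_moment (v : Fin n → H) (J : Finset (Fin n)) :
    signAvg (fun ξ => ‖rsum v J ξ‖ ^ 4) ≤ 3 * (∑ t ∈ J, ‖v t‖ ^ 2) ^ 2 := by
  induction J using Finset.induction_on with
  | empty => simp [rsum, signAvg]
  | insert t J ht ih =>
    have key : ∀ ξ, ‖rsum v (insert t J) ξ‖ ^ 4 + ‖rsum v (insert t J) (flipOn {t} ξ)‖ ^ 4 ≤
        2 * ‖rsum v J ξ‖ ^ 4 + (12 * ‖v t‖ ^ 2 * ‖rsum v J ξ‖ ^ 2 + 2 * ‖v t‖ ^ 4) := by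
      intro ξ
      rw [rsum_insert v ht, rsum_insert v ht, rsum_flip_not_mem v ht, sv_flip_mem (by simp)]
      have hn : ‖sv ξ t • v t‖ = ‖v t‖ := by
        rw [norm_smul, Real.norm_eq_abs, sv, abs_rad, one_mul]
      set a := sv ξ t • v t
      set u := rsum v J ξ
      have e1 : ‖a + u‖ ^ 4 = (‖a‖ ^ 2 + 2 * inner ℝ a u + ‖u‖ ^ 2) ^ 2 := by
        rw [← norm_add_sq_real]; ring
      have e2 : ‖-a + u‖ ^ 4 = (‖a‖ ^ 2 - 2 * inner ℝ a u + ‖u‖ ^ 2) ^ 2 := by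
        have : ‖-a + u‖ ^ 2 = ‖a‖ ^ 2 - 2 * inner ℝ a u + ‖u‖ ^ 2 := by
          rw [norm_add_sq_real, norm_neg, inner_neg_left]; ring
        rw [← this]; ring
      have h3 : (inner ℝ a u) ^ 2 ≤ ‖a‖ ^ 2 * ‖u‖ ^ 2 := by
        rw [← mul_pow, ← sq_abs]
        gcongr
        exact abs_real_inner_le_norm a u
      rw [neg_smul, e1, e2, ← hn]
      nlinarith [h3]
    have h2 := signAvg_mono key
    rw [signAvg_add, signAvg_add, signAvg_add, signAvg_mul, signAvg_mul, signAvg_const,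
      signAvg_flip {t} (fun ξ => ‖rsum v (insert t J) ξ‖ ^ 4), rsum_second_moment] at h2
    rw [Finset.sum_insert ht]
    nlinarith [sq_nonneg (‖v t‖ ^ 2), ih]

/-- Paley–Zygmund for Hilbert-space valued Rademacher sums. -/
lemma rsum_large (v : Fin n → H) (J : Finset (Fin n)) (hpos : 0 < ∑ t ∈ J, ‖v t‖ ^ 2) :
    1 / 12 ≤ signAvg (fun ξ => ind ((∑ t ∈ J, ‖v t‖ ^ 2) / 2 ≤ ‖rsum v J ξ‖ ^ 2)) := by
  set σ := ∑ t ∈ J, ‖v t‖ ^ 2 with hσ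
  -- `(z - 1/2) (7 - z) / 11` is a polynomial minorant of the indicator of `z ≥ 1/2`
  have key : ∀ ξ, (15 / (22 * σ)) * ‖rsum v J ξ‖ ^ 2 + (-(1 / (11 * σ ^ 2)) * ‖rsum v J ξ‖ ^ 4 +
      (-(7 / 22))) ≤ ind (σ / 2 ≤ ‖rsum v J ξ‖ ^ 2) := by
    intro ξ
    obtain ⟨z, hz⟩ : ∃ z, ‖rsum v J ξ‖ ^ 2 = σ * z := ⟨‖rsum v J ξ‖ ^ 2 / σ, by field_simp⟩
    have h4 : ‖rsum v J ξ‖ ^ 4 = (σ * z) ^ 2 := by rw [← hz]; ring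
    have hlhs : (15 / (22 * σ)) * ‖rsum v J ξ‖ ^ 2 + (-(1 / (11 * σ ^ 2)) * ‖rsum v J ξ‖ ^ 4 +
      (-(7 / 22))) = (z - 1 / 2) * (7 - z) / 11 := by
      rw [h4, hz]; field_simp; ring
    rw [hlhs]
    by_cases hc : σ / 2 ≤ ‖rsum v J ξ‖ ^ 2
    · rw [ind_true hc]
      nlinarith [sq_nonneg (z - 15 / 4)]
    · rw [ind_false hc]
      have hz2 : z < 1 / 2 := by
        rw [hz] at hc
        by_contra hcon
        exact hc (by nlinarith)
      nlinarith
  have h2 := signAvg_mono key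
  rw [signAvg_add, signAvg_add, signAvg_mul, signAvg_mul, signAvg_const, rsum_second_moment,
    ← hσ] at h2
  have h4 := rsum_fourth_moment v J
  rw [← hσ] at h4
  have h5 : (1 / (11 * σ ^ 2)) * signAvg (fun ξ => ‖rsum v J ξ‖ ^ 4) ≤ 3 / 11 := by
    calc _ ≤ (1 / (11 * σ ^ 2)) * (3 * σ ^ 2) := by gcongr
      _ = 3 / 11 := by field_simp
  have h6 : 15 / (22 * σ) * σ = 15 / 22 := by field_simp
  linarith

end smallBall

section smallBall2
variable {n : ℕ} {H : Type*} [NormedAddCommGroup H] [InnerProductSpace ℝ H]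

lemma rsum_congr (v : Fin n → H) {J : Finset (Fin n)} {ξ ζ : Fin n → Bool}
    (h : ∀ t ∈ J, ξ t = ζ t) : rsum v J ξ = rsum v J ζ := by
  unfold rsum sv
  exact Finset.sum_congr rfl fun t ht => by rw [h t ht]

lemma rsum_chebyshev (v : Fin n → H) (J : Finset (Fin n)) {m τ : ℝ} (hm : 0 < m)
    (h : ∑ t ∈ J, ‖v t‖ ^ 2 ≤ τ * m ^ 2) :
    signAvg (fun ξ => ind (m < ‖rsum v J ξ‖)) ≤ τ := by
  have key : ∀ ξ, ind (m < ‖rsum v J ξ‖) ≤ (1 / m ^ 2) * ‖rsum v J ξ‖ ^ 2 := by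
    intro ξ
    by_cases hc : m < ‖rsum v J ξ‖
    · rw [ind_true hc, one_div, inv_mul_eq_div, one_le_div (by positivity)]
      gcongr
    · rw [ind_false hc]; positivity
  have h2 := signAvg_mono key
  rw [signAvg_mul, rsum_second_moment] at h2
  calc _ ≤ _ := h2
    _ ≤ (1 / m ^ 2) * (τ * m ^ 2) := by gcongr
    _ = τ := by field_simp

/-- Small-ball estimate by iteration over scales: if there are at least `N₀ κ₀ ^ s` summands of
comparable norms then the Rademacher sum falls into a given ball of radius `√(N₀ b)` with
probability at most `(23/24) ^ s + 24 τ`.  Most of the summands produce a symmetric vector whose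
norm is, with probability at least `1/12`, so large that one of its two signs takes the sum out of
reach of the remaining summands. -/
lemma small_ball (v : Fin n → H) {a b τ r : ℝ} {κ₀ N₀ : ℕ} (ha : 0 < a) (hb : 0 < b)
    (hτ : 0 < τ) (hτ1 : τ ≤ 1) (hκ : 1 + 8 * b / (a * τ) ≤ κ₀) (hN : 1 ≤ N₀) (hr : 0 ≤ r)
    (hr2 : r ^ 2 ≤ N₀ * b) (s : ℕ) :
    ∀ J : Finset (Fin n), (∀ t ∈ J, a ≤ ‖v t‖ ^ 2 ∧ ‖v t‖ ^ 2 ≤ b) → N₀ * κ₀ ^ s ≤ J.card →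
      ∀ h : H, signAvg (fun ξ => ind (‖h + rsum v J ξ‖ < r)) ≤ (23 / 24) ^ s + 24 * τ := by
  have hκ1 : 1 ≤ κ₀ := by
    have : (1 : ℝ) ≤ κ₀ := le_trans (by have : 0 ≤ 8 * b / (a * τ) := by positivity
                                        linarith) hκ
    exact_mod_cast this
  induction s with
  | zero =>
    intro J _ _ h
    have : signAvg (fun ξ => ind (‖h + rsum v J ξ‖ < r)) ≤ signAvg fun _ : Fin n → Bool => 1 :=
      signAvg_mono fun ξ => ind_le_one _
    rw [signAvg_const] at this
    norm_num
    linarith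
  | succ s ih =>
    intro J hJ hcard h
    set N := N₀ * κ₀ ^ s with hNdef
    have hN1 : N₀ ≤ N := Nat.le_mul_of_pos_right _ (by positivity)
    have hcard' : N * κ₀ ≤ J.card := by rw [hNdef, mul_assoc, ← pow_succ]; exact hcard
    obtain ⟨J1, hJ1, hc1⟩ := Finset.exists_subset_card_eq
      (le_trans (Nat.le_mul_of_pos_right N hκ1) hcard')
    set J2 := J \ J1 with hJ2
    have hN1' : (N₀ : ℝ) ≤ N := by exact_mod_cast hN1
    have hN0' : (1 : ℝ) ≤ N₀ := by exact_mod_cast hN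
    have hNpos : (0 : ℝ) < N := by linarith
    set m := Real.sqrt (N * b / τ) with hm
    have hmpos : 0 < m := Real.sqrt_pos.2 (by positivity)
    have hm2 : m ^ 2 = N * b / τ := Real.sq_sqrt (by positivity)
    have hrm : r ≤ m := by
      rw [← abs_of_nonneg hr, ← abs_of_nonneg hmpos.le, ← sq_le_sq, hm2, le_div_iff₀ hτ]
      nlinarith [mul_le_mul_of_nonneg_right hN1' hb.le]
    have hσ : 8 * m ^ 2 ≤ ∑ t ∈ J2, ‖v t‖ ^ 2 := by
      have h1 : (J2.card : ℝ) * a ≤ ∑ t ∈ J2, ‖v t‖ ^ 2 := by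
        rw [← nsmul_eq_mul]
        exact Finset.card_nsmul_le_sum _ _ _ fun t ht => (hJ t (mem_sdiff.1 ht).1).1
      have h2 : J2.card + N = J.card := by
        rw [hJ2, ← hc1]; exact Finset.card_sdiff_add_card_eq_card hJ1
      have h3 : (J2.card : ℝ) + N = J.card := by exact_mod_cast h2
      have h4 : (N : ℝ) * κ₀ ≤ J.card := by exact_mod_cast hcard'
      have h5 : (N : ℝ) * (1 + 8 * b / (a * τ)) ≤ N * κ₀ := by gcongr
      have h6 : (N : ℝ) * (8 * b / (a * τ)) ≤ J2.card := by linarith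
      calc 8 * m ^ 2 = (N : ℝ) * (8 * b / (a * τ)) * a := by rw [hm2]; field_simp
        _ ≤ J2.card * a := by gcongr
        _ ≤ _ := h1
    have hcheb : signAvg (fun ξ => ind (m < ‖rsum v J1 ξ‖)) ≤ τ := by
      apply rsum_chebyshev v J1 hmpos
      calc ∑ t ∈ J1, ‖v t‖ ^ 2 ≤ J1.card • b :=
            Finset.sum_le_card_nsmul _ _ _ fun t ht => (hJ t (hJ1 ht)).2
        _ = τ * m ^ 2 := by rw [hm2, nsmul_eq_mul, hc1]; field_simp
    set Q : ℝ := (23 / 24) ^ s + 24 * τ with hQ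
    have hQpos : 0 < (23 / 24 : ℝ) ^ s := by positivity
    let p : H → ℝ := fun u => signAvg (fun ξ => ind (‖(h + u) + rsum v J1 ξ‖ < r))
    have hp : ∀ u, p u ≤ Q := fun u =>
      ih J1 (fun t ht => hJ t (hJ1 ht)) (by rw [hc1]) (h + u)
    have hfar : ∀ u, m + r ≤ ‖h + u‖ → p u ≤ τ := by
      intro u hu
      refine le_trans (signAvg_mono fun ξ => ?_) hcheb
      by_cases hc : ‖(h + u) + rsum v J1 ξ‖ < r
      · rw [ind_true hc, ind_true]
        have : ‖h + u‖ ≤ ‖(h + u) + rsum v J1 ξ‖ + ‖rsum v J1 ξ‖ := by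
          simpa using norm_sub_le ((h + u) + rsum v J1 ξ) (rsum v J1 ξ)
        linarith
      · rw [ind_false hc]; exact ind_nonneg _
    have hpair : ∀ ζ, p (rsum v J2 ζ) + p (rsum v J2 (flipOn univ ζ)) ≤
        2 * Q + (-(Q - τ)) * ind ((∑ t ∈ J2, ‖v t‖ ^ 2) / 2 ≤ ‖rsum v J2 ζ‖ ^ 2) := by
      intro ζ
      have hneg : rsum v J2 (flipOn univ ζ) = - rsum v J2 ζ := by
        unfold rsum
        rw [← Finset.sum_neg_distrib]
        refine Finset.sum_congr rfl fun t _ => ?_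
        rw [sv_flip_mem (mem_univ t), neg_smul]
      rw [hneg]
      set u := rsum v J2 ζ
      have hp1 := hp u
      have hp2 := hp (-u)
      by_cases hc : (∑ t ∈ J2, ‖v t‖ ^ 2) / 2 ≤ ‖u‖ ^ 2
      · rw [ind_true hc]
        have h2m : 2 * m ≤ ‖u‖ := by
          apply le_of_sq_le_sq _ (norm_nonneg u)
          nlinarith
        have htri : 2 * ‖u‖ ≤ ‖h + u‖ + ‖h + -u‖ := by
          have := norm_sub_le (h + u) (h + -u)
          have e : (h + u) - (h + -u) = (2 : ℝ) • u := by rw [two_smul]; abel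
          rw [e, norm_smul] at this
          simpa using this
        by_cases hh : m + r ≤ ‖h + u‖
        · have := hfar u hh
          linarith
        · have := hfar (-u) (by linarith)
          linarith
      · rw [ind_false hc]
        linarith
    have hsplit : signAvg (fun ξ => ind (‖h + rsum v J ξ‖ < r)) =
        signAvg (fun ζ => p (rsum v J2 ζ)) := by
      rw [← signAvg_mix J1]
      congr 1
      funext ζ
      congr 1
      funext ξ
      congr 2
      have e1 : rsum v J (mix J1 ξ ζ) = rsum v J1 ξ + rsum v J2 ζ := by
        rw [← rsum_congr v (ξ := mix J1 ξ ζ) (ζ := ξ) (J := J1) (fun t ht => by simp [mix, ht]),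
          ← rsum_congr v (ξ := mix J1 ξ ζ) (ζ := ζ) (J := J2)
            (fun t ht => by simp [mix, (mem_sdiff.1 ht).2])]
        unfold rsum
        rw [add_comm, hJ2, Finset.sum_sdiff hJ1]
      rw [e1]
      congr 1
      abel_nf
    have havg := signAvg_mono hpair
    rw [signAvg_add, signAvg_flip univ (fun ζ => p (rsum v J2 ζ)), signAvg_add, signAvg_const,
      signAvg_mul] at havg
    have hlarge := rsum_large v J2 (by nlinarith [sq_pos_of_pos hmpos])
    have hQτ : 0 ≤ Q - τ := by rw [hQ]; linarith
    rw [hsplit]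
    have := mul_le_mul_of_nonneg_left hlarge hQτ
    rw [pow_succ]
    have hfin : signAvg (fun ζ => p (rsum v J2 ζ)) ≤ Q - (Q - τ) / 24 := by linarith
    rw [hQ] at hfin
    linarith

end smallBall2

/-! ### Growing the sum of squares of the permanents with a given row set -/

section growth
variable {n : ℕ}

/-- The sum of the squares of all permanents with row set `A` and columns inside `P`. -/
noncomputable def gam (M : Matrix (Fin n) (Fin n) ℝ) (P A : Finset (Fin n)) : ℝ :=
  ∑ T ∈ P.powerset, permOn M A T ^ 2

lemma gam_nonneg (M : Matrix (Fin n) (Fin n) ℝ) (P A : Finset (Fin n)) : 0 ≤ gam M P A :=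
  Finset.sum_nonneg fun _ _ => sq_nonneg _

/-- The coefficient vector of the sign `ξ_t` of a new row: its entry at the column set `T ∋ t` is
the cofactor of `t`. -/
noncomputable def cofVec (M : Matrix (Fin n) (Fin n) ℝ) (P A : Finset (Fin n)) (t : Fin n) :
    EuclideanSpace ℝ (Finset (Fin n)) :=
  WithLp.toLp 2 fun T => if t ∈ T ∧ T ⊆ P then permOn M A (T.erase t) else 0

lemma norm_rsum_cofVec (M : Matrix (Fin n) (Fin n) ℝ) {P A : Finset (Fin n)} {x : Fin n}
    (hx : x ∉ P) (hA : A ⊆ P) (ξ : Fin n → Bool) :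
    ‖rsum (cofVec M P A) P ξ‖ ^ 2 = gam (setRow M x (sv ξ)) P (insert x A) := by
  rw [EuclideanSpace.norm_sq_eq]
  unfold gam
  rw [← Finset.sum_subset (subset_univ P.powerset)]
  · refine Finset.sum_congr rfl fun T hT => ?_
    rw [mem_powerset] at hT
    rw [permOn_setRow_row _ _ (fun h => hx (hA h)) (fun h => hx (hT h)), Real.norm_eq_abs, sq_abs]
    congr 1
    simp only [rsum, cofVec, WithLp.ofLp_sum, WithLp.ofLp_smul, Finset.sum_apply, Pi.smul_apply,
      smul_eq_mul, hT, and_true]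
    rw [← Finset.sum_subset hT]
    · exact Finset.sum_congr rfl fun t ht => by rw [if_pos ht]
    · intro t _ ht
      rw [if_neg ht, mul_zero]
  · intro T _ hT
    rw [mem_powerset] at hT
    simp [rsum, cofVec, hT]

lemma norm_cofVec (M : Matrix (Fin n) (Fin n) ℝ) {P A : Finset (Fin n)} {t : Fin n}
    (ht : t ∈ P) :
    ‖cofVec M P A t‖ ^ 2 = ∑ S ∈ P.powerset, if t ∈ S then 0 else permOn M A S ^ 2 := by
  rw [EuclideanSpace.norm_sq_eq]
  have h1 : ∀ T : Finset (Fin n), ‖(cofVec M P A t).ofLp T‖ ^ 2 =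
      if t ∈ T ∧ T ⊆ P then permOn M A (T.erase t) ^ 2 else 0 := by
    intro T
    rw [Real.norm_eq_abs, sq_abs]
    unfold cofVec
    split_ifs with h <;> simp [h]
  rw [Finset.sum_congr rfl fun T _ => h1 T, ← Finset.sum_filter]
  have h2 : (∑ S ∈ P.powerset, if t ∈ S then 0 else permOn M A S ^ 2) =
      ∑ S ∈ P.powerset with t ∉ S, permOn M A S ^ 2 := by
    rw [Finset.sum_filter]
    exact Finset.sum_congr rfl fun S _ => by split_ifs <;> simp_all
  rw [h2]
  refine Finset.sum_bij' (fun T _ => T.erase t) (fun S _ => insert t S) ?_ ?_ ?_ ?_ ?_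
  · intro T hT
    simp only [mem_filter, mem_univ, true_and] at hT
    simp only [mem_filter, mem_powerset]
    exact ⟨(erase_subset _ _).trans hT.2, by simp⟩
  · intro S hS
    simp only [mem_filter, mem_powerset] at hS
    simp only [mem_filter, mem_univ, true_and]
    exact ⟨by simp, insert_subset ht hS.1⟩
  · intro T hT
    simp only [mem_filter, mem_univ, true_and] at hT
    exact insert_erase hT.1
  · intro S hS
    simp only [mem_filter, mem_powerset] at hS
    exact erase_insert hS.2
  · intro T _
    rfl

lemma sum_norm_cofVec (M : Matrix (Fin n) (Fin n) ℝ) (P A : Finset (Fin n)) :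
    ∑ t ∈ P, ‖cofVec M P A t‖ ^ 2 = ((P.card : ℝ) - A.card) * gam M P A := by
  rw [Finset.sum_congr rfl fun t ht => norm_cofVec M ht, Finset.sum_comm]
  unfold gam
  rw [Finset.mul_sum]
  refine Finset.sum_congr rfl fun S hS => ?_
  rw [mem_powerset] at hS
  by_cases hc : A.card = S.card
  · have h1 : (∑ t ∈ P, if t ∈ S then 0 else permOn M A S ^ 2) =
        ∑ t ∈ P \ S, permOn M A S ^ 2 := by
      rw [← Finset.filter_notMem_eq_sdiff, Finset.sum_filter]
      exact Finset.sum_congr rfl fun S _ => by split_ifs <;> simp_all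
    rw [h1, Finset.sum_const, nsmul_eq_mul, card_sdiff_of_subset hS,
      Nat.cast_sub (card_le_card hS), hc]
  · rw [permOn_eq_zero M hc]
    simp

/-- Adding a random row multiplies `gam` by at least `N₀`, unless a small-ball event occurs. -/
lemma gam_step (M : Matrix (Fin n) (Fin n) ℝ) {P A : Finset (Fin n)} {x : Fin n} (hx : x ∉ P)
    (hA : A ⊆ P) {w s κ₀ N₀ : ℕ} {τ : ℝ} (hw : 0 < w) (hwP : A.card + w ≤ P.card)
    (hτ : 0 < τ) (hτ1 : τ ≤ 1) (hκ : 1 + 16 * n / (w * τ) ≤ κ₀) (hN : 1 ≤ N₀)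
    (hNw : 2 * (N₀ * κ₀ ^ s) ≤ w) (hpos : 0 < gam M P A) :
    signAvg (fun ξ => ind (gam (setRow M x (sv ξ)) P (insert x A) < N₀ * gam M P A)) ≤
      (23 / 24) ^ s + 24 * τ := by
  set Γ := gam M P A with hΓ
  have hPn : P.card ≤ n := by simpa using card_le_univ P
  have hn : 0 < n := by omega
  have hw' : (0 : ℝ) < w := by exact_mod_cast hw
  have hn' : (0 : ℝ) < n := by exact_mod_cast hn
  set v := cofVec M P A with hv
  set a := (w / (2 * n) : ℝ) * Γ with ha
  have hle : ∀ t ∈ P, ‖v t‖ ^ 2 ≤ Γ := by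
    intro t ht
    rw [hv, norm_cofVec M ht, hΓ]
    unfold gam
    refine Finset.sum_le_sum fun S _ => ?_
    split_ifs
    · positivity
    · exact le_rfl
  set J := P.filter fun t => a ≤ ‖v t‖ ^ 2 with hJ
  have hJP : J ⊆ P := filter_subset _ _
  have hJcard : w ≤ 2 * J.card := by
    have h1 : (w : ℝ) * Γ ≤ J.card * Γ + (w / 2) * Γ := by
      calc (w : ℝ) * Γ ≤ ((P.card : ℝ) - A.card) * Γ := by
            gcongr
            have : (A.card : ℝ) + w ≤ P.card := by exact_mod_cast hwP
            linarith
        _ = ∑ t ∈ P, ‖v t‖ ^ 2 := (sum_norm_cofVec M P A).symm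
        _ = ∑ t ∈ J, ‖v t‖ ^ 2 + ∑ t ∈ P with ¬ a ≤ ‖v t‖ ^ 2, ‖v t‖ ^ 2 :=
            (Finset.sum_filter_add_sum_filter_not P _ _).symm
        _ ≤ J.card • Γ + (P.filter fun t => ¬ a ≤ ‖v t‖ ^ 2).card • a := by
            gcongr
            · exact Finset.sum_le_card_nsmul _ _ _ fun t ht => hle t (hJP ht)
            · refine Finset.sum_le_card_nsmul _ _ _ fun t ht => ?_
              exact (not_le.1 (mem_filter.1 ht).2).le
        _ ≤ J.card * Γ + n * a := by
            rw [nsmul_eq_mul, nsmul_eq_mul]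
            gcongr
            exact_mod_cast (card_filter_le _ _).trans hPn
        _ = J.card * Γ + (w / 2) * Γ := by
            rw [ha]; field_simp
    have h2 : (w : ℝ) ≤ 2 * J.card := by
      have : (w : ℝ) ≤ J.card + w / 2 := by
        apply le_of_mul_le_mul_right _ hpos
        linarith
      linarith
    exact_mod_cast h2
  have hsb := small_ball v (a := a) (b := Γ) (τ := τ) (r := Real.sqrt (N₀ * Γ)) (κ₀ := κ₀)
    (N₀ := N₀) (by positivity) hpos hτ hτ1
    (by
      refine le_trans (le_of_eq ?_) hκ
      rw [ha]; field_simp; ring) hN (Real.sqrt_nonneg _)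
    (by rw [Real.sq_sqrt (by positivity)]) s J
    (fun t ht => ⟨(mem_filter.1 ht).2, hle t (hJP ht)⟩) (by omega)
  rw [← signAvg_mix J, ← signAvg_const (n := n) ((23 / 24) ^ s + 24 * τ)]
  refine signAvg_mono fun ζ => ?_
  refine le_trans (le_of_eq ?_) (hsb (rsum v (P \ J) ζ))
  congr 1
  funext ξ
  congr 1
  have e1 : rsum v P (mix J ξ ζ) = rsum v (P \ J) ζ + rsum v J ξ := by
    rw [← rsum_congr v (ξ := mix J ξ ζ) (ζ := ξ) (J := J) (fun t ht => by simp [mix, ht]),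
      ← rsum_congr v (ξ := mix J ξ ζ) (ζ := ζ) (J := P \ J)
        (fun t ht => by simp [mix, (mem_sdiff.1 ht).2])]
    unfold rsum
    rw [Finset.sum_sdiff hJP]
  rw [← e1, ← norm_rsum_cofVec M hx hA, Real.lt_sqrt (norm_nonneg _)]

end growth

/-! ### Averages over the random symmetric matrix, and revealing one row at a time -/

/-- The expectation of `f` at the random symmetric sign matrix. -/
noncomputable def matAvg (n : ℕ) (f : Matrix (Fin n) (Fin n) ℝ → ℝ) : ℝ :=
  (∑ ω : Fin n → Fin n → Bool, f (symMat n ω)) / 2 ^ (n * n)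

section matAvg
variable {n : ℕ}

lemma matAvg_mono {f g : Matrix (Fin n) (Fin n) ℝ → ℝ} (h : ∀ M, f M ≤ g M) :
    matAvg n f ≤ matAvg n g := by
  unfold matAvg
  have := Finset.sum_le_sum
    (fun ω (_ : ω ∈ (univ : Finset (Fin n → Fin n → Bool))) => h (symMat n ω))
  gcongr

lemma matAvg_const (c : ℝ) : matAvg n (fun _ => c) = c := by
  unfold matAvg
  simp [← pow_mul]

lemma matAvg_add (f g : Matrix (Fin n) (Fin n) ℝ → ℝ) :
    matAvg n (fun M => f M + g M) = matAvg n f + matAvg n g := by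
  unfold matAvg
  rw [Finset.sum_add_distrib, add_div]

lemma matAvg_mul (c : ℝ) (f : Matrix (Fin n) (Fin n) ℝ → ℝ) :
    matAvg n (fun M => c * f M) = c * matAvg n f := by
  unfold matAvg
  rw [← Finset.mul_sum, mul_div_assoc]

lemma prob_eq_matAvg (P : Matrix (Fin n) (Fin n) ℝ → Prop) :
    prob n P = matAvg n fun M => ind (P M) := by
  unfold prob matAvg ind
  simp

lemma one_sub_prob (P : Matrix (Fin n) (Fin n) ℝ → Prop) :
    1 - prob n P = matAvg n fun M => ind (¬ P M) := by
  have h : matAvg n (fun M => ind (P M) + ind (¬ P M)) = 1 := by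
    rw [← matAvg_const (n := n) 1]
    congr 1
    funext M
    by_cases h : P M <;> simp [ind, h]
  rw [matAvg_add, ← prob_eq_matAvg] at h
  linarith

/-- Boolean data of the matrix whose row and column `x` are overwritten by `ξ`. -/
def overwrite (x : Fin n) (ξ : Fin n → Bool) (ω : Fin n → Fin n → Bool) : Fin n → Fin n → Bool :=
  fun i j => if i = x then ξ j else if j = x then ξ i else ω i j

/-- Boolean data of the matrix whose row and column `x` are multiplied by the signs `ξ`. -/
def twist (x : Fin n) (ξ : Fin n → Bool) (ω : Fin n → Fin n → Bool) : Fin n → Fin n → Bool :=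
  fun i j => xor (if i = x then ξ j else if j = x then ξ i else false) (ω i j)

lemma twist_twist (x : Fin n) (ξ : Fin n → Bool) (ω : Fin n → Fin n → Bool) :
    twist x ξ (twist x ξ ω) = ω := by
  funext i j
  simp [twist]

lemma symMat_overwrite (x : Fin n) (ξ : Fin n → Bool) (ω : Fin n → Fin n → Bool) :
    symMat n (overwrite x ξ ω) = setRow (symMat n ω) x (sv ξ) := by
  funext i j
  by_cases hi : i = x
  · subst hi
    by_cases hj : j = i
    · subst hj
      simp [symMat, overwrite, setRow, sv]
    · simp [symMat, overwrite, setRow, sv, hj]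
  · by_cases hj : j = x
    · subst hj
      simp [symMat, overwrite, setRow, sv, hi]
    · simp [symMat, overwrite, setRow, hi, hj]

/-- The Boolean data of row `x` of the symmetric matrix. -/
def rowData (x : Fin n) (ω : Fin n → Fin n → Bool) : Fin n → Bool :=
  fun j => if x ≤ j then ω x j else ω j x

lemma symMat_twist (x : Fin n) (ξ : Fin n → Bool) (ω : Fin n → Fin n → Bool) :
    symMat n (twist x ξ ω) =
      symMat n (overwrite x (fun j => xor (ξ j) (rowData x ω j)) ω) := by
  funext i j
  by_cases hi : i = x
  · subst hi
    by_cases hj : j = i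
    · subst hj
      simp [symMat, overwrite, twist, rowData]
    · simp only [symMat, overwrite, twist, rowData, hj]
      split_ifs <;> simp_all
  · by_cases hj : j = x
    · subst hj
      simp only [symMat, overwrite, twist, rowData, hi]
      by_cases h : i ≤ j
      · have h' : ¬ j ≤ i := fun h2 => hi (le_antisymm h h2)
        simp [h, h']
      · have h' : j ≤ i := (not_le.1 h).le
        simp [h, h']
    · simp [symMat, overwrite, twist, hi, hj]

/-- Row `x` may be resampled independently of everything else. -/
lemma matAvg_setRow (x : Fin n) (f : Matrix (Fin n) (Fin n) ℝ → ℝ) :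
    matAvg n f = matAvg n fun M => signAvg fun ξ => f (setRow M x (sv ξ)) := by
  have h1 : ∀ ω, ∑ ξ : Fin n → Bool, f (setRow (symMat n ω) x (sv ξ)) =
      ∑ ξ : Fin n → Bool, f (symMat n (twist x ξ ω)) := by
    intro ω
    let e : (Fin n → Bool) ≃ (Fin n → Bool) :=
      { toFun := fun ξ j => xor (ξ j) (rowData x ω j)
        invFun := fun ξ j => xor (ξ j) (rowData x ω j)
        left_inv := fun ξ => by funext j; simp
        right_inv := fun ξ => by funext j; simp }
    refine (Fintype.sum_equiv e _ _ fun ξ => ?_).symm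
    rw [symMat_twist, symMat_overwrite]
    rfl
  have h2 : ∀ ξ : Fin n → Bool, ∑ ω, f (symMat n (twist x ξ ω)) = ∑ ω, f (symMat n ω) := fun ξ =>
    Fintype.sum_equiv ⟨twist x ξ, twist x ξ, twist_twist x ξ, twist_twist x ξ⟩ _ _ fun _ => rfl
  unfold matAvg signAvg
  congr 1
  rw [← Finset.sum_div, Finset.sum_congr rfl fun ω _ => h1 ω, Finset.sum_comm,
    Finset.sum_congr rfl fun ξ _ => h2 ξ]
  simp

end matAvg

/-! ### Potential functions -/

/-- The least potential `V s` of a valid state `s` (and `0` if no state is valid). -/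
noncomputable def best {α : Type*} (valid : α → Prop) (V : α → ℝ) : ℝ := sInf (V '' {s | valid s})

section best
variable {α : Type*} {valid : α → Prop} {V : α → ℝ}

lemma best_le (hV : ∀ s, 0 ≤ V s) {s : α} (h : valid s) : best valid V ≤ V s :=
  csInf_le ⟨0, by rintro _ ⟨t, _, rfl⟩; exact hV t⟩ ⟨s, h, rfl⟩

lemma best_nonneg (hV : ∀ s, 0 ≤ V s) : 0 ≤ best valid V :=
  Real.sInf_nonneg (by rintro _ ⟨t, _, rfl⟩; exact hV t)

lemma best_attained [Finite α] (h : ∃ s, valid s) : ∃ s, valid s ∧ V s = best valid V := by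
  have hne : (V '' {s | valid s}).Nonempty := by
    obtain ⟨s, hs⟩ := h
    exact ⟨_, s, hs, rfl⟩
  obtain ⟨s, hs, h⟩ := hne.csInf_mem (Set.toFinite _)
  exact ⟨s, hs, h⟩

end best

/-- Revealing the rows in `F` one at a time: if the potential of a valid state contracts on average
with each new row `x`, then the expected least potential obeys the corresponding recursion. The set
`P` consists of the indices already revealed, and `valid P M s` depends only on the entries of `M`
indexed by `P`. -/
lemma run {n : ℕ} {α : Type*} [Finite α]
    (valid : Finset (Fin n) → Matrix (Fin n) (Fin n) ℝ → α → Prop)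
    (V : Finset (Fin n) → α → ℝ) (P₀ F : Finset (Fin n))
    (hdisj : Disjoint P₀ F) {κ b : ℝ} (hκ : 0 ≤ κ) (hb : 0 ≤ b)
    (hinv : ∀ P M x v s, P₀ ⊆ P → x ∉ P → (valid P (setRow M x v) s ↔ valid P M s))
    (hpers : ∀ P M x s, P₀ ⊆ P → x ∉ P → valid P M s → valid (insert x P) M s)
    (hstep : ∀ P M x s, P₀ ⊆ P → x ∈ F → x ∉ P → valid P M s →
      signAvg (fun ξ => best (valid (insert x P) (setRow M x (sv ξ))) (V (insert x P))) ≤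
        κ * V P s + b)
    (u : ℕ → ℝ) (hu : ∀ k, κ * u k + b ≤ u (k + 1))
    (h0 : matAvg n (fun M => ind (∃ s, valid P₀ M s) * best (valid P₀ M) (V P₀)) ≤ u 0) :
    matAvg n (fun M => ind (∃ s, valid P₀ M s) * best (valid (P₀ ∪ F) M) (V (P₀ ∪ F))) ≤
      u F.card ∧ ∀ M s, valid P₀ M s → valid (P₀ ∪ F) M s := by
  suffices H : ∀ F' ⊆ F,
      matAvg n (fun M => ind (∃ s, valid P₀ M s) * best (valid (P₀ ∪ F') M) (V (P₀ ∪ F'))) ≤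
      u F'.card ∧ ∀ M s, valid P₀ M s → valid (P₀ ∪ F') M s from H F subset_rfl
  intro F'
  induction F' using Finset.induction_on with
  | empty =>
    intro _
    simpa using h0
  | insert x F' hx ih =>
    intro hF
    have hxF : x ∈ F := hF (mem_insert_self _ _)
    obtain ⟨ih1, ih2⟩ := ih ((subset_insert _ _).trans hF)
    set P := P₀ ∪ F' with hP
    have hxP0 : x ∉ P₀ := fun h => disjoint_left.1 hdisj h hxF
    have hxP : x ∉ P := by simp [hP, hxP0, hx]
    have hPP : P₀ ⊆ P := subset_union_left
    have hPi : P₀ ∪ insert x F' = insert x P := by rw [hP, union_insert]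
    rw [hPi, card_insert_of_notMem hx]
    refine ⟨?_, fun M s h => hpers P M x s hPP hxP (ih2 M s h)⟩
    rw [matAvg_setRow x]
    refine le_trans (matAvg_mono (g := fun M => κ * (ind (∃ s, valid P₀ M s) *
      best (valid P M) (V P)) + b) fun M => ?_) ?_
    · have hG : ∀ ξ : Fin n → Bool, (∃ s, valid P₀ (setRow M x (sv ξ)) s) ↔ ∃ s, valid P₀ M s :=
        fun ξ => exists_congr fun s => hinv P₀ M x _ s subset_rfl hxP0
      simp only [hG]
      rw [signAvg_mul]
      by_cases h : ∃ s, valid P₀ M s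
      · rw [ind_true h, one_mul, one_mul]
        obtain ⟨s, hs⟩ := h
        obtain ⟨t, ht, hbt⟩ := best_attained (V := V P) ⟨s, ih2 M s hs⟩
        rw [← hbt]
        exact hstep P M x t hPP hxF hxP ht
      · rw [ind_false h]
        simpa using hb
    · rw [matAvg_add, matAvg_mul, matAvg_const]
      refine le_trans ?_ (hu F'.card)
      gcongr

section growth
variable {n : ℕ}

lemma gam_mono (M : Matrix (Fin n) (Fin n) ℝ) {P Q : Finset (Fin n)} (A : Finset (Fin n))
    (h : P ⊆ Q) : gam M P A ≤ gam M Q A :=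
  Finset.sum_le_sum_of_subset_of_nonneg (powerset_mono.2 h) fun _ _ _ => sq_nonneg _

lemma gam_setRow (M : Matrix (Fin n) (Fin n) ℝ) {P A : Finset (Fin n)} {x : Fin n} (hx : x ∉ P)
    (hA : A ⊆ P) (v : Fin n → ℝ) : gam (setRow M x v) P A = gam M P A := by
  unfold gam
  refine Finset.sum_congr rfl fun T hT => ?_
  rw [permOn_setRow M v (fun h => hx (hA h)) (fun h => hx (mem_powerset.1 hT h))]

lemma one_le_gam_empty (M : Matrix (Fin n) (Fin n) ℝ) (P : Finset (Fin n)) : 1 ≤ gam M P ∅ := by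
  unfold gam
  calc (1 : ℝ) = permOn M ∅ ∅ ^ 2 := by rw [permOn_empty]; norm_num
    _ ≤ _ := Finset.single_le_sum (f := fun T => permOn M ∅ T ^ 2) (fun _ _ => sq_nonneg _)
        (empty_mem_powerset P)

/-- All but `j` of the rows in `F` can be used, each contributing a factor `N₀` to `gam`: the
expectation of `β` to the number of unused rows at most doubles with each row. -/
lemma growth_phase (P₀ F : Finset (Fin n)) (hdisj : Disjoint P₀ F) {w s κ₀ N₀ : ℕ} {τ β : ℝ}
    (j : ℕ) (hw : 0 < w) (hwP : w ≤ P₀.card) (hτ : 0 < τ) (hτ1 : τ ≤ 1)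
    (hκ : 1 + 16 * n / (w * τ) ≤ κ₀) (hN : 1 ≤ N₀) (hNw : 2 * (N₀ * κ₀ ^ s) ≤ w) (hβ : 1 ≤ β)
    (hβη : ((23 / 24) ^ s + 24 * τ) * β ≤ 1) :
    matAvg n (fun M => ind (¬ ∃ A ⊆ F, F.card ≤ A.card + j ∧
      (N₀ : ℝ) ^ A.card ≤ gam M (P₀ ∪ F) A)) ≤ 2 ^ F.card / β ^ (j + 1) := by
  let valid : Finset (Fin n) → Matrix (Fin n) (Fin n) ℝ → Finset (Fin n) → Prop :=
    fun P M A => A ⊆ P \ P₀ ∧ (N₀ : ℝ) ^ A.card ≤ gam M P A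
  let V : Finset (Fin n) → Finset (Fin n) → ℝ := fun P A => β ^ ((P \ P₀) \ A).card
  have hβ0 : 0 < β := by linarith
  have hV : ∀ P A, 0 ≤ V P A := fun P A => by positivity
  have hvalid0 : ∀ P M, valid P M ∅ := fun P M => ⟨empty_subset _, by
    simpa using one_le_gam_empty M P⟩
  have hrun := run valid V P₀ F hdisj (κ := 2) (b := 0) (by norm_num) le_rfl
    (by
      intro P M x v A hP hx
      have : A ⊆ P \ P₀ → gam (setRow M x v) P A = gam M P A := fun h =>
        gam_setRow M hx (h.trans sdiff_subset) v
      constructor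
      · rintro ⟨h1, h2⟩
        exact ⟨h1, by rwa [this h1] at h2⟩
      · rintro ⟨h1, h2⟩
        exact ⟨h1, by rwa [this h1]⟩)
    (by
      rintro P M x A hP hx ⟨h1, h2⟩
      exact ⟨h1.trans (sdiff_subset_sdiff (subset_insert _ _) subset_rfl),
        h2.trans (gam_mono M A (subset_insert _ _))⟩)
    (by
      rintro P M x A hP hxF hx ⟨h1, h2⟩
      have hxP0 : x ∉ P₀ := fun h => hx (hP h)
      have hAP : A ⊆ P := h1.trans sdiff_subset
      have hxA : x ∉ A := fun h => hx (hAP h)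
      have hN' : (1 : ℝ) ≤ N₀ := by exact_mod_cast hN
      have hpos : 0 < gam M P A := lt_of_lt_of_le (by positivity) h2
      have hcard : A.card + w ≤ P.card := by
        have := card_le_card h1
        rw [card_sdiff_of_subset hP] at this
        have := card_le_card hP
        omega
      have hsb := gam_step M hx hAP hw hcard hτ hτ1 hκ hN hNw hpos
      have hd : insert x P \ P₀ = insert x (P \ P₀) := insert_sdiff_of_notMem _ hxP0
      have hfail : V (insert x P) A = β * V P A := by
        simp only [V]
        rw [hd, insert_sdiff_of_notMem _ hxA, card_insert_of_notMem, pow_succ, mul_comm]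
        simp [hx]
      have hsucc : V (insert x P) (insert x A) = V P A := by
        simp only [V]
        rw [hd, insert_sdiff_insert, sdiff_insert_of_notMem]
        simp [hx]
      have hpt : ∀ ξ : Fin n → Bool,
          best (valid (insert x P) (setRow M x (sv ξ))) (V (insert x P)) ≤
          V P A + (β * V P A) *
            ind (gam (setRow M x (sv ξ)) P (insert x A) < N₀ * gam M P A) := by
        intro ξ
        by_cases hc : gam (setRow M x (sv ξ)) P (insert x A) < N₀ * gam M P A
        · rw [ind_true hc, mul_one, ← hfail]
          have hv : valid (insert x P) (setRow M x (sv ξ)) A := by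
            refine ⟨h1.trans (sdiff_subset_sdiff (subset_insert _ _) subset_rfl), ?_⟩
            refine le_trans ?_ (gam_mono _ A (subset_insert x P))
            rw [gam_setRow M hx hAP]
            exact h2
          have := best_le (hV (insert x P)) hv
          have := hV P A
          linarith
        · rw [ind_false hc, mul_zero, add_zero, ← hsucc]
          refine best_le (hV _) ⟨?_, ?_⟩
          · rw [hd]
            exact insert_subset_insert _ h1
          · refine le_trans ?_ (gam_mono _ _ (subset_insert x P))
            rw [card_insert_of_notMem hxA, pow_succ, mul_comm]
            refine le_trans ?_ (not_lt.1 hc)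
            gcongr
      have havg := signAvg_mono hpt
      rw [signAvg_add, signAvg_const, signAvg_mul] at havg
      refine havg.trans ?_
      have h3 : (β * V P A) * signAvg (fun ξ => ind (gam (setRow M x (sv ξ)) P (insert x A) <
          N₀ * gam M P A)) ≤ (β * V P A) * ((23 / 24) ^ s + 24 * τ) :=
        mul_le_mul_of_nonneg_left hsb (mul_nonneg hβ0.le (hV P A))
      have h4 : (((23 / 24) ^ s + 24 * τ) * β) * V P A ≤ 1 * V P A :=
        mul_le_mul_of_nonneg_right hβη (hV P A)
      linarith)
    (fun k => 2 ^ k) (fun k => by rw [pow_succ]; linarith)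
    (by
      refine le_trans (matAvg_mono (g := fun _ => 1) fun M => ?_) (by rw [matAvg_const]; norm_num)
      rw [ind_true ⟨∅, hvalid0 P₀ M⟩, one_mul]
      refine (best_le (hV P₀) (hvalid0 P₀ M)).trans ?_
      simp [V])
  rw [le_div_iff₀ (by positivity), mul_comm, ← matAvg_mul]
  refine le_trans (matAvg_mono fun M => ?_) hrun.1
  have hG : ∃ A, valid P₀ M A := ⟨∅, hvalid0 P₀ M⟩
  rw [ind_true hG, one_mul]
  by_cases hc : ∃ A ⊆ F, F.card ≤ A.card + j ∧ (N₀ : ℝ) ^ A.card ≤ gam M (P₀ ∪ F) A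
  · rw [ind_false (not_not.2 hc), mul_zero]
    exact best_nonneg (hV _)
  · rw [ind_true hc, mul_one]
    obtain ⟨A, hA, hVA⟩ := best_attained (V := V (P₀ ∪ F)) ⟨∅, hvalid0 (P₀ ∪ F) M⟩
    rw [← hVA]
    have hF : (P₀ ∪ F) \ P₀ = F := by
      rw [union_sdiff_left]
      exact sdiff_eq_self_of_disjoint hdisj.symm
    have hAF : A ⊆ F := by rw [← hF]; exact hA.1
    simp only [V]
    rw [hF]
    apply pow_le_pow_right₀ hβ
    by_contra hcon
    refine hc ⟨A, hAF, ?_, hA.2⟩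
    rw [card_sdiff_of_subset hAF] at hcon
    omega

/-- Pigeonhole over the at most `2 ^ n` column sets. -/
lemma exists_of_gam (M : Matrix (Fin n) (Fin n) ℝ) {P A : Finset (Fin n)} {Λ : ℝ} (hΛ : 0 < Λ)
    (h : Λ ^ 2 * 2 ^ n ≤ gam M P A) : ∃ T ⊆ P, A.card = T.card ∧ Λ ≤ |permOn M A T| := by
  by_contra hcon
  push Not at hcon
  have hlt : ∀ T ∈ P.powerset, permOn M A T ^ 2 < Λ ^ 2 := by
    intro T hT
    by_cases hc : A.card = T.card
    · have := hcon T (mem_powerset.1 hT) hc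
      rw [← sq_abs]
      gcongr
    · rw [permOn_eq_zero M hc]
      have : 0 < Λ ^ 2 := by positivity
      simpa using this
  have h2 : gam M P A < ∑ T ∈ P.powerset, Λ ^ 2 :=
    Finset.sum_lt_sum_of_nonempty ⟨∅, empty_mem_powerset P⟩ hlt
  rw [sum_const, card_powerset, nsmul_eq_mul, mul_comm] at h2
  have h3 : ((2 ^ P.card : ℕ) : ℝ) ≤ 2 ^ n := by
    push_cast
    exact pow_le_pow_right₀ (by norm_num) (by simpa using card_le_univ P)
  have h4 : Λ ^ 2 * ((2 ^ P.card : ℕ) : ℝ) ≤ Λ ^ 2 * 2 ^ n := by gcongr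
  linarith

end growth

/-! ### Extending a single minor by a random row, or by a random row and column -/

section extend
variable {n : ℕ} (M : Matrix (Fin n) (Fin n) ℝ) {x c d : Fin n} {A B : Finset (Fin n)}

lemma permOn_row_flip {F : Finset (Fin n)} (hxA : x ∉ A) (hxB : x ∉ B) (hdx : d ≠ x) (hdB : d ∉ B)
    (hd : d ∈ F) (hF : Disjoint F B) (ξ : Fin n → Bool) :
    permOn (setRow M x (sv (flipOn F ξ))) (insert x A) (insert d B) =
      permOn (setRow M x (sv ξ)) (insert x A) (insert d B) - 2 * (sv ξ d * permOn M A B) := by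
  have hx : x ∉ insert d B := by simp [hxB, hdx.symm]
  rw [permOn_setRow_row _ _ hxA hx, permOn_setRow_row _ _ hxA hx, sum_insert hdB, sum_insert hdB,
    erase_insert hdB, sv_flip_mem hd]
  have : ∑ b ∈ B, sv (flipOn F ξ) b * permOn M A ((insert d B).erase b) =
      ∑ b ∈ B, sv ξ b * permOn M A ((insert d B).erase b) :=
    Finset.sum_congr rfl fun b hb => by
      rw [sv_flip_not_mem fun h => disjoint_left.1 hF h hb]
  rw [this]
  ring

lemma permOn_row_unchanged (hxA : x ∉ A) (hxB : x ∉ B) {F : Finset (Fin n)} (hF : Disjoint F B)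
    (ξ : Fin n → Bool) : permOn (setRow M x (sv (flipOn F ξ))) (insert x A) B =
      permOn (setRow M x (sv ξ)) (insert x A) B := by
  rw [permOn_setRow_row _ _ hxA hxB, permOn_setRow_row _ _ hxA hxB]
  exact Finset.sum_congr rfl fun b hb => by
    rw [sv_flip_not_mem fun h => disjoint_left.1 hF h hb]

lemma abs_sv_mul (ξ : Fin n → Bool) (t : Fin n) (y : ℝ) : |sv ξ t * y| = |y| := by
  rw [abs_mul, sv, abs_rad, one_mul]

/-- Two numbers at distance at least `2 l` are not both smaller than `l` in absolute value. -/
lemma not_both_small {a b l : ℝ} (h : l ≤ |b|) (h1 : |a| < l) (h2 : |a - 2 * b| < l) : False := by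
  have h3 : |2 * b| ≤ |a| + |a - 2 * b| := by
    have := abs_sub a (a - 2 * b)
    simpa using this
  rw [abs_mul, abs_two] at h3
  linarith

/-- The permanent with the row `x` added can be completed by some column of `D`, except with
probability `2 ^ (-|D|)`. -/
lemma row_fail {D : Finset (Fin n)} {l : ℝ} (hxA : x ∉ A) (hxB : x ∉ B) (hxD : x ∉ D)
    (hD : Disjoint D B) (hl : l ≤ |permOn M A B|) :
    signAvg (fun ξ => ind (∀ d ∈ D,
      |permOn (setRow M x (sv ξ)) (insert x A) (insert d B)| < l)) ≤ (1 / 2) ^ D.card := by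
  apply signAvg_ind_flip_le
  rintro ξ h1 F hFD ⟨d, hd⟩ h2
  have h1' := h1 d (hFD hd)
  have h2' := h2 d (hFD hd)
  have hdB : d ∉ B := fun h => disjoint_left.1 hD (hFD hd) h
  rw [permOn_row_flip M hxA hxB (fun h => hxD (h ▸ hFD hd)) hdB hd
    (disjoint_of_subset_left hFD hD)] at h2'
  exact not_both_small (by rwa [abs_sv_mul]) h1' h2'

lemma permOn_both_flip (hxA : x ∉ A) (hxB : x ∉ B) (hcx : c ≠ x) (hcA : c ∉ A) (hcB : c ∉ B)
    (ξ : Fin n → Bool) :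
    permOn (setRow M x (sv (flipOn {c} ξ))) (insert x (insert c A)) (insert x B) =
      permOn (setRow M x (sv ξ)) (insert x (insert c A)) (insert x B) -
        2 * (sv ξ c * permOn (setRow M x (sv ξ)) (insert x A) B) := by
  have hx : x ∉ insert c A := by simp [hxA, hcx.symm]
  have hs : ∀ t, t ≠ c → sv (flipOn {c} ξ) t = sv ξ t := fun t ht =>
    sv_flip_not_mem (by simpa using ht) ξ
  rw [permOn_setRow_both _ _ hx hxB, permOn_setRow_both _ _ hx hxB, permOn_setRow_row _ _ hxA hxB,
    hs x hcx.symm]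
  have hin : ∀ q ∈ B, ∑ p ∈ insert c A,
      sv (flipOn {c} ξ) q * sv (flipOn {c} ξ) p * permOn M ((insert c A).erase p) (B.erase q) =
      (∑ p ∈ insert c A, sv ξ q * sv ξ p * permOn M ((insert c A).erase p) (B.erase q)) -
      2 * (sv ξ c * (sv ξ q * permOn M A (B.erase q))) := by
    intro q hq
    rw [sum_insert hcA, sum_insert hcA, erase_insert hcA, sv_flip_mem (mem_singleton_self c),
      hs q (fun h => hcB (h ▸ hq))]
    have : ∑ p ∈ A, sv ξ q * sv (flipOn {c} ξ) p * permOn M ((insert c A).erase p) (B.erase q) =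
        ∑ p ∈ A, sv ξ q * sv ξ p * permOn M ((insert c A).erase p) (B.erase q) :=
      Finset.sum_congr rfl fun p hp => by rw [hs p (fun h => hcA (h ▸ hp))]
    rw [this]
    ring
  rw [Finset.sum_congr rfl hin, Finset.sum_sub_distrib, ← Finset.mul_sum, ← Finset.mul_sum]
  ring

/-- With probability at most one half, the row `x` can be completed but the row `c` and the column
`x` cannot be added on top of it: the sign `ξ_c` does not affect the former and multiplies the
coefficient of the entry at `(c, x)`. -/
lemma col_fail {D : Finset (Fin n)} {l : ℝ} (hxA : x ∉ A) (hxB : x ∉ B) (hxD : x ∉ D)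
    (hcx : c ≠ x) (hcA : c ∉ A) (hcB : c ∉ B) (hcD : c ∉ D) :
    signAvg (fun ξ => ind ((∃ d ∈ D,
        l ≤ |permOn (setRow M x (sv ξ)) (insert x A) (insert d B)|) ∧
      ∀ d ∈ D, l ≤ |permOn (setRow M x (sv ξ)) (insert x A) (insert d B)| →
        |permOn (setRow M x (sv ξ)) (insert x (insert c A)) (insert x (insert d B))| < l)) ≤
      1 / 2 := by
  have := signAvg_ind_flip_le {c} (fun ξ => (∃ d ∈ D,
        l ≤ |permOn (setRow M x (sv ξ)) (insert x A) (insert d B)|) ∧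
      ∀ d ∈ D, l ≤ |permOn (setRow M x (sv ξ)) (insert x A) (insert d B)| →
        |permOn (setRow M x (sv ξ)) (insert x (insert c A)) (insert x (insert d B))| < l) ?_
  · simpa using this
  rintro ξ ⟨⟨d, hd, hl⟩, h1⟩ F hF hne ⟨_, h2⟩
  obtain rfl : F = {c} := (subset_singleton_iff.1 hF).resolve_left hne.ne_empty
  have hdx : d ≠ x := fun h => hxD (h ▸ hd)
  have hdc : d ≠ c := fun h => hcD (h ▸ hd)
  have hx' : x ∉ insert d B := by simp [hxB, hdx.symm]
  have hc' : c ∉ insert d B := by simp [hcB, hdc.symm]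
  have h1' := h1 d hd hl
  have h2' := h2 d hd
  rw [permOn_row_unchanged M hxA hx' (disjoint_singleton_left.2 hc'),
    permOn_both_flip M hxA hx' hcx hcA hc'] at h2'
  exact not_both_small (by rwa [abs_sv_mul]) h1' (h2' hl)

/-- The average of a quantity controlled by the outcome of adding the row `x` and then possibly the
row `c` and column `x`. -/
lemma rowcol_avg {D : Finset (Fin n)} {l : ℝ} (hxA : x ∉ A) (hxB : x ∉ B) (hxD : x ∉ D)
    (hD : Disjoint D B) (hl : l ≤ |permOn M A B|)
    (hcx : c ≠ x) (hcA : c ∉ A) (hcB : c ∉ B) (hcD : c ∉ D)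
    (g : (Fin n → Bool) → ℝ) {α₀ α₁ α₂ : ℝ} (h0 : 0 ≤ α₀) (h2 : 0 ≤ α₂) (h21 : α₂ ≤ α₁)
    (hg0 : ∀ ξ, g ξ ≤ α₀)
    (hg1 : ∀ ξ, ∀ d ∈ D, l ≤ |permOn (setRow M x (sv ξ)) (insert x A) (insert d B)| → g ξ ≤ α₁)
    (hg2 : ∀ ξ, ∀ d ∈ D,
      l ≤ |permOn (setRow M x (sv ξ)) (insert x (insert c A)) (insert x (insert d B))| →
      g ξ ≤ α₂) :
    signAvg g ≤ α₀ * (1 / 2) ^ D.card + (α₁ + α₂) / 2 := by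
  have hr := row_fail M hxA hxB hxD hD hl
  have hcf := col_fail M (l := l) hxA hxB hxD hcx hcA hcB hcD
  have key : ∀ ξ, g ξ ≤ α₀ * ind (∀ d ∈ D,
      |permOn (setRow M x (sv ξ)) (insert x A) (insert d B)| < l) + (α₂ + (α₁ - α₂) *
      ind ((∃ d ∈ D, l ≤ |permOn (setRow M x (sv ξ)) (insert x A) (insert d B)|) ∧
      ∀ d ∈ D, l ≤ |permOn (setRow M x (sv ξ)) (insert x A) (insert d B)| →
        |permOn (setRow M x (sv ξ)) (insert x (insert c A)) (insert x (insert d B))| < l)) := by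
    intro ξ
    by_cases c1 : ∀ d ∈ D, |permOn (setRow M x (sv ξ)) (insert x A) (insert d B)| < l
    · rw [ind_true c1]
      have := hg0 ξ
      have := mul_nonneg (sub_nonneg.2 h21) (ind_nonneg ((∃ d ∈ D,
        l ≤ |permOn (setRow M x (sv ξ)) (insert x A) (insert d B)|) ∧
        ∀ d ∈ D, l ≤ |permOn (setRow M x (sv ξ)) (insert x A) (insert d B)| →
        |permOn (setRow M x (sv ξ)) (insert x (insert c A)) (insert x (insert d B))| < l))
      linarith
    · rw [ind_false c1]
      push Not at c1
      by_cases c2 : ∀ d ∈ D, l ≤ |permOn (setRow M x (sv ξ)) (insert x A) (insert d B)| →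
        |permOn (setRow M x (sv ξ)) (insert x (insert c A)) (insert x (insert d B))| < l
      · rw [ind_true ⟨c1, c2⟩]
        obtain ⟨d, hd, hh⟩ := c1
        have := hg1 ξ d hd hh
        linarith
      · rw [ind_false fun h => c2 h.2]
        push Not at c2
        obtain ⟨d, hd, _, hh⟩ := c2
        have := hg2 ξ d hd hh
        linarith
  have havg := signAvg_mono key
  rw [signAvg_add, signAvg_add, signAvg_mul, signAvg_mul, signAvg_const] at havg
  have e1 := mul_le_mul_of_nonneg_left hr h0
  have e2 := mul_le_mul_of_nonneg_left hcf (sub_nonneg.2 h21)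
  linarith

/-- The coefficient of `ξ_p ξ_q` in the permanent obtained by adding the row and column `x`. -/
noncomputable def pairCoeff (M : Matrix (Fin n) (Fin n) ℝ) (A B : Finset (Fin n)) (p q : Fin n) :
    ℝ :=
  (if p ∈ A ∧ q ∈ B then permOn M (A.erase p) (B.erase q) else 0) +
    if q ∈ A ∧ p ∈ B then permOn M (A.erase q) (B.erase p) else 0

/-- Adding a random row and column reaches the size of any coefficient `ξ_p ξ_q` with probability
at least one quarter, by taking second differences. -/
lemma quad_fail {p q : Fin n} (hpq : p ≠ q) (hpx : p ≠ x) (hqx : q ≠ x) (hxA : x ∉ A)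
    (hxB : x ∉ B) :
    signAvg (fun ξ => ind (|permOn (setRow M x (sv ξ)) (insert x A) (insert x B)| <
      |pairCoeff M A B p q|)) ≤ 3 / 4 := by
  apply signAvg_ind_four_le {p} {q} {p, q}
  have hmono : ∀ (ξ : Fin n → Bool) (r s : Fin n), sv ξ s * sv ξ r -
      sv (flipOn {p} ξ) s * sv (flipOn {p} ξ) r - sv (flipOn {q} ξ) s * sv (flipOn {q} ξ) r +
      sv (flipOn {p, q} ξ) s * sv (flipOn {p, q} ξ) r =
      4 * (sv ξ p * sv ξ q) *
        ((if r = p then if s = q then 1 else 0 else 0) +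
          if r = q then if s = p then 1 else 0 else 0) := by
    intro ξ r s
    have hf : ∀ (F : Finset (Fin n)) (t : Fin n), sv (flipOn F ξ) t =
        if t ∈ F then - sv ξ t else sv ξ t := by
      intro F t
      split_ifs with h
      · exact sv_flip_mem h ξ
      · exact sv_flip_not_mem h ξ
    simp only [hf, mem_singleton, mem_insert]
    by_cases h1 : r = p <;> by_cases h2 : r = q <;> by_cases h3 : s = p <;> by_cases h4 : s = q <;>
      simp_all <;> ring
  have hsec : ∀ ξ : Fin n → Bool,
      permOn (setRow M x (sv ξ)) (insert x A) (insert x B) -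
      permOn (setRow M x (sv (flipOn {p} ξ))) (insert x A) (insert x B) -
      permOn (setRow M x (sv (flipOn {q} ξ))) (insert x A) (insert x B) +
      permOn (setRow M x (sv (flipOn {p, q} ξ))) (insert x A) (insert x B) =
      4 * (sv ξ p * (sv ξ q * pairCoeff M A B p q)) := by
    intro ξ
    simp only [permOn_setRow_both M _ hxA hxB]
    rw [sv_flip_not_mem (by simpa using hpx.symm), sv_flip_not_mem (by simpa using hqx.symm),
      sv_flip_not_mem (by simp [hpx.symm, hqx.symm])]
    have e : ∑ s ∈ B, ∑ r ∈ A, (4 * (sv ξ p * sv ξ q) *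
        ((if r = p then if s = q then 1 else 0 else 0) +
          if r = q then if s = p then 1 else 0 else 0)) * permOn M (A.erase r) (B.erase s) =
        4 * (sv ξ p * (sv ξ q * pairCoeff M A B p q)) := by
      have e1 : ∀ p q : Fin n, ∑ s ∈ B, ∑ r ∈ A, (if r = p then if s = q then (1 : ℝ) else 0 else 0)
          * permOn M (A.erase r) (B.erase s) =
          if p ∈ A ∧ q ∈ B then permOn M (A.erase p) (B.erase q) else 0 := by
        intro p q
        simp only [ite_mul, one_mul, zero_mul, Finset.sum_ite_eq']
        by_cases hp : p ∈ A <;> simp [hp]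
      unfold pairCoeff
      rw [← e1, ← e1, ← Finset.sum_add_distrib, Finset.mul_sum, Finset.mul_sum, Finset.mul_sum]
      refine Finset.sum_congr rfl fun s _ => ?_
      rw [← Finset.sum_add_distrib, Finset.mul_sum, Finset.mul_sum, Finset.mul_sum]
      refine Finset.sum_congr rfl fun r _ => ?_
      ring
    rw [← e]
    have e2 : ∀ y a b c d : ℝ, y + a - (y + b) - (y + c) + (y + d) = a - b - c + d := by
      intros; ring
    rw [e2]
    simp only [← Finset.sum_sub_distrib, ← Finset.sum_add_distrib]
    refine Finset.sum_congr rfl fun s _ => Finset.sum_congr rfl fun r _ => ?_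
    rw [← hmono]
    ring
  intro ξ h1 h2 h3 h4
  have h5 := congrArg (fun y => |y|) (hsec ξ)
  simp only [abs_mul, sv, abs_rad, one_mul] at h5
  rw [abs_of_pos (by norm_num : (0 : ℝ) < 4)] at h5
  rw [abs_lt] at h1 h2 h3 h4
  have h6 : |permOn (setRow M x (sv ξ)) (insert x A) (insert x B) -
      permOn (setRow M x (sv (flipOn {p} ξ))) (insert x A) (insert x B) -
      permOn (setRow M x (sv (flipOn {q} ξ))) (insert x A) (insert x B) +
      permOn (setRow M x (sv (flipOn {p, q} ξ))) (insert x A) (insert x B)| <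
      4 * |pairCoeff M A B p q| := by
    rw [abs_lt]
    constructor <;> linarith [h1.1, h1.2, h2.1, h2.2, h3.1, h3.2, h4.1, h4.2]
  exact absurd h5 h6.ne

end extend

/-! ### Making the column set almost contained in the row set -/

section phase2
variable {n : ℕ}

/-- The state `s = (A, B)` is a heavy minor: row set `A` off `X`, column set `B`, both already
revealed, of equal size at least `a₀`. The required size of the permanent decreases by a factor `2`
with each revealed index. -/
def IsMinor (X : Finset (Fin n)) (a₀ : ℕ) (μ : ℝ) (P : Finset (Fin n))
    (M : Matrix (Fin n) (Fin n) ℝ) (s : Finset (Fin n) × Finset (Fin n)) : Prop :=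
  s.1 ⊆ P \ X ∧ s.2 ⊆ P ∧ s.1.card = s.2.card ∧ a₀ ≤ s.1.card ∧
    μ / 2 ^ P.card ≤ |permOn M s.1 s.2|

variable {X P : Finset (Fin n)} {a₀ : ℕ} {μ : ℝ} {M : Matrix (Fin n) (Fin n) ℝ} {x : Fin n}

lemma isMinor_setRow (v : Fin n → ℝ) (s : Finset (Fin n) × Finset (Fin n)) (hx : x ∉ P) :
    IsMinor X a₀ μ P (setRow M x v) s ↔ IsMinor X a₀ μ P M s := by
  unfold IsMinor
  refine and_congr_right fun h1 => and_congr_right fun h2 => ?_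
  rw [permOn_setRow M v (fun h => hx (h1.trans sdiff_subset h)) (fun h => hx (h2 h))]

lemma thr_insert (hμ : 0 ≤ μ) (hx : x ∉ P) :
    μ / 2 ^ (insert x P).card = μ / 2 ^ P.card / 2 ∧ μ / 2 ^ P.card / 2 ≤ μ / 2 ^ P.card := by
  rw [card_insert_of_notMem hx, pow_succ]
  refine ⟨by field_simp, ?_⟩
  have : 0 ≤ μ / 2 ^ P.card := by positivity
  linarith

lemma isMinor_insert (hμ : 0 ≤ μ) {s : Finset (Fin n) × Finset (Fin n)} (hx : x ∉ P)
    (h : IsMinor X a₀ μ P M s) : IsMinor X a₀ μ (insert x P) M s := by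
  obtain ⟨h1, h2, h3, h4, h5⟩ := h
  have := thr_insert hμ hx
  exact ⟨h1.trans (sdiff_subset_sdiff (subset_insert _ _) subset_rfl),
    h2.trans (subset_insert _ _), h3, h4, by linarith⟩

/-- For a column `c` that is not yet a row, there is a way of adding the row `c` and a column so
that, upon adding a further random row and column, one of the pair coefficients is at least half of
the current permanent. With two candidates `d`, `d'` for the new column, three coefficients are
available which are the pairwise sums of three numbers, one of which is the current permanent. -/
lemma exists_target (M : Matrix (Fin n) (Fin n) ℝ) {A B : Finset (Fin n)} {c : Fin n}
    (hcB : c ∈ B) (hcA : c ∉ A) (hcX : c ∉ X) (hAX : Disjoint A X) (hcard : A.card = B.card)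
    (hX : X.Nonempty) :
    ∃ (B' : Finset (Fin n)) (p q : Fin n), B' ⊆ A ∪ B ∪ X ∧ B'.card = A.card + 1 ∧ p ≠ q ∧
      p ∈ A ∪ B ∪ X ∧ q ∈ A ∪ B ∪ X ∧
      |permOn M A B| / 2 ≤ |pairCoeff M (insert c A) B' p q| := by
  have hone : ∀ d, d ∉ B → d ∈ A ∪ X → (insert d B) ⊆ A ∪ B ∪ X ∧
      (insert d B).card = A.card + 1 ∧ c ≠ d ∧ c ∈ A ∪ B ∪ X ∧ d ∈ A ∪ B ∪ X := by
    intro d hdB hd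
    refine ⟨?_, by rw [card_insert_of_notMem hdB, hcard], fun h => hdB (h ▸ hcB), by simp [hcB], ?_⟩
    · intro y hy
      simp only [mem_insert, mem_union] at hy hd ⊢
      rcases hy with rfl | hy <;> tauto
    · simp only [mem_union] at hd ⊢
      tauto
  by_cases hd : ∃ d ∈ A \ B, ∃ d' ∈ A \ B, d ≠ d'
  · obtain ⟨d, hd, d', hd', hne⟩ := hd
    rw [mem_sdiff] at hd hd'
    set f : Fin n → ℝ := fun d => permOn M ((insert c A).erase d) (insert d (B.erase c)) with hf
    have hcoeff : ∀ d, d ∈ A → d ∉ B → pairCoeff M (insert c A) (insert d B) c d =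
        permOn M A B + f d := by
      intro d hdA hdB
      have hdc : d ≠ c := fun h => hcA (h ▸ hdA)
      unfold pairCoeff
      rw [if_pos (by simp), if_pos (by simp [hdA, hcB]), erase_insert hcA, erase_insert hdB,
        erase_insert_of_ne hdc]
    by_cases c1 : |permOn M A B| / 2 ≤ |permOn M A B + f d|
    · obtain ⟨h1, h2, h3, h4, h5⟩ := hone d hd.2 (by simp [hd.1])
      exact ⟨_, c, d, h1, h2, h3, h4, h5, by rwa [hcoeff d hd.1 hd.2]⟩
    by_cases c2 : |permOn M A B| / 2 ≤ |permOn M A B + f d'|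
    · obtain ⟨h1, h2, h3, h4, h5⟩ := hone d' hd'.2 (by simp [hd'.1])
      exact ⟨_, c, d', h1, h2, h3, h4, h5, by rwa [hcoeff d' hd'.1 hd'.2]⟩
    have hdB' : d ∉ B.erase c := fun h => hd.2 (mem_of_mem_erase h)
    have hdB'' : d' ∉ B.erase c := fun h => hd'.2 (mem_of_mem_erase h)
    have hdi : d ∉ insert d' (B.erase c) := by
      rw [mem_insert]; rintro (h | h)
      · exact hne h
      · exact hdB' h
    refine ⟨insert d (insert d' (B.erase c)), d, d', ?_, ?_, hne, by simp [hd.1], by simp [hd'.1],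
      ?_⟩
    · intro y hy
      simp only [mem_insert, mem_erase, mem_union] at hy ⊢
      rcases hy with rfl | rfl | hy <;> tauto
    · rw [card_insert_of_notMem hdi, card_insert_of_notMem hdB'', card_erase_of_mem hcB, hcard]
      have : 0 < B.card := card_pos.2 ⟨c, hcB⟩
      omega
    · have e : pairCoeff M (insert c A) (insert d (insert d' (B.erase c))) d d' = f d + f d' := by
        unfold pairCoeff
        rw [if_pos (by simp [hd.1]), if_pos (by simp [hd'.1]), erase_insert hdi,
          insert_comm d d', erase_insert, hf]
        · simp only [mem_insert, not_or]
          exact ⟨hne.symm, hdB''⟩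
      rw [e]
      by_contra c3
      rw [not_le] at c1 c2 c3
      have h2 : |2 * permOn M A B| ≤
          |permOn M A B + f d| + |permOn M A B + f d'| + |f d + f d'| := by
        have e2 : 2 * permOn M A B =
          (permOn M A B + f d) + (permOn M A B + f d') - (f d + f d') := by ring
        rw [e2]
        exact (abs_sub _ _).trans (by gcongr; exact abs_add_le _ _)
      rw [abs_mul, abs_two] at h2
      have := abs_nonneg (permOn M A B)
      linarith
  · push Not at hd
    have hcardBA : (B \ A).card ≤ 1 := by
      have h1 : (A \ B).card ≤ 1 := card_le_one.2 hd
      have h2 := card_sdiff_add_card_inter A B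
      have h3 := card_sdiff_add_card_inter B A
      rw [inter_comm] at h3
      omega
    obtain ⟨d, hdX⟩ := hX
    have hdA : d ∉ A := fun h => disjoint_left.1 hAX h hdX
    have hdB : d ∉ B := by
      intro h
      have := card_le_one.1 hcardBA d (mem_sdiff.2 ⟨h, hdA⟩) c (mem_sdiff.2 ⟨hcB, hcA⟩)
      exact hcX (this ▸ hdX)
    obtain ⟨h1, h2, h3, h4, h5⟩ := hone d hdB (by simp [hdX])
    refine ⟨insert d B, c, d, h1, h2, h3, h4, h5, ?_⟩
    unfold pairCoeff
    rw [if_pos (by simp), if_neg (by simp [hdA, h3.symm]), erase_insert hcA, erase_insert hdB,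
      add_zero]
    have := abs_nonneg (permOn M A B)
    linarith

/-- The columns outside `X` that are not rows. -/
def extraCols (X : Finset (Fin n)) (s : Finset (Fin n) × Finset (Fin n)) : Finset (Fin n) :=
  (s.2 \ s.1) \ X

/-- With probability at least one quarter a new index `x` removes an extra column, by adding that
column as a row together with the row and column `x`; otherwise the old minor is kept. -/
lemma cols_step (hμ : 0 ≤ μ) (hX : X.Nonempty) (hXP : X ⊆ P) (hx : x ∉ P)
    {s : Finset (Fin n) × Finset (Fin n)} (h : IsMinor X a₀ μ P M s) :
    signAvg (fun ξ => best (IsMinor X a₀ μ (insert x P) (setRow M x (sv ξ)))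
      (fun s => (2 : ℝ) ^ (extraCols X s).card - 1)) ≤
      7 / 8 * ((2 : ℝ) ^ (extraCols X s).card - 1) + 0 := by
  obtain ⟨A, B⟩ := s
  have hV : ∀ s : Finset (Fin n) × Finset (Fin n), 0 ≤ (2 : ℝ) ^ (extraCols X s).card - 1 :=
    fun s => sub_nonneg.2 (one_le_pow₀ (by norm_num))
  have hstay : ∀ ξ : Fin n → Bool, best (IsMinor X a₀ μ (insert x P) (setRow M x (sv ξ)))
      (fun s => (2 : ℝ) ^ (extraCols X s).card - 1) ≤ (2 : ℝ) ^ (extraCols X (A, B)).card - 1 :=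
    fun ξ => best_le hV (isMinor_insert hμ hx ((isMinor_setRow _ _ hx).2 h))
  by_cases hE : extraCols X (A, B) = ∅
  · refine (signAvg_mono hstay).trans ?_
    rw [signAvg_const, hE]
    norm_num
  obtain ⟨c, hc⟩ := nonempty_iff_ne_empty.2 hE
  obtain ⟨h1, h2, h3, h4, h5⟩ := h
  simp only at h1 h2 h3 h4 h5
  have hc' := hc
  simp only [extraCols, mem_sdiff] at hc'
  have hAP : A ⊆ P := h1.trans sdiff_subset
  have hAX : Disjoint A X := disjoint_left.2 fun y hy => (mem_sdiff.1 (h1 hy)).2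
  have hcP : c ∈ P := h2 hc'.1.1
  have hxc : x ≠ c := fun h => hx (h ▸ hcP)
  obtain ⟨B', p, q, hB', hcard', hpq, hp, hq, hbig⟩ :=
    exists_target M hc'.1.1 hc'.1.2 hc'.2 hAX h3 hX
  have hU : A ∪ B ∪ X ⊆ P := union_subset (union_subset hAP h2) hXP
  have hB'P : B' ⊆ P := hB'.trans hU
  have hA'P : insert c A ⊆ P := insert_subset hcP hAP
  have hxA' : x ∉ insert c A := fun h => hx (hA'P h)
  have hxB' : x ∉ B' := fun h => hx (hB'P h)
  have hquad := quad_fail M (x := x) hpq (fun h => hx (h ▸ hU hp)) (fun h => hx (h ▸ hU hq)) hxA' hxB'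
  have hpot : (2 : ℝ) ^ (extraCols X (insert x (insert c A), insert x B')).card ≤
      (2 : ℝ) ^ (extraCols X (A, B)).card / 2 := by
    have hsub : extraCols X (insert x (insert c A), insert x B') ⊆ (extraCols X (A, B)).erase c := by
      intro y hy
      simp only [extraCols, mem_sdiff, mem_insert, not_or, mem_erase] at hy ⊢
      obtain ⟨⟨h6, h7, h8, h9⟩, h10⟩ := hy
      have h11 := hB' (h6.resolve_left h7)
      simp only [mem_union] at h11
      tauto
    have hle := card_le_card hsub
    have hpos : 0 < (extraCols X (A, B)).card := card_pos.2 ⟨c, hc⟩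
    rw [card_erase_of_mem hc] at hle
    rw [le_div_iff₀ (by norm_num), ← pow_succ]
    exact pow_le_pow_right₀ (by norm_num) (by omega)
  set v := (2 : ℝ) ^ (extraCols X (A, B)).card with hv
  have key : ∀ ξ : Fin n → Bool, best (IsMinor X a₀ μ (insert x P) (setRow M x (sv ξ)))
      (fun s => (2 : ℝ) ^ (extraCols X s).card - 1) ≤ (v / 2 - 1) + (v / 2) *
        ind (|permOn (setRow M x (sv ξ)) (insert x (insert c A)) (insert x B')| <
          |pairCoeff M (insert c A) B' p q|) := by
    intro ξ
    by_cases hf : |permOn (setRow M x (sv ξ)) (insert x (insert c A)) (insert x B')| <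
          |pairCoeff M (insert c A) B' p q|
    · rw [ind_true hf]
      refine (hstay ξ).trans (le_of_eq ?_)
      ring
    · rw [ind_false hf]
      refine (best_le (s := (insert x (insert c A), insert x B')) hV ?_).trans (by linarith)
      have hthr := thr_insert hμ hx
      have hcA : (insert c A).card = A.card + 1 := card_insert_of_notMem hc'.1.2
      refine ⟨?_, insert_subset_insert _ hB'P, ?_, ?_, ?_⟩
      · intro y hy
        simp only [mem_insert, mem_sdiff] at hy ⊢
        rcases hy with rfl | rfl | hy
        · exact ⟨Or.inl rfl, fun h => hx (hXP h)⟩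
        · exact ⟨Or.inr hcP, hc'.2⟩
        · exact ⟨Or.inr (hAP hy), disjoint_left.1 hAX hy⟩
      · simp only
        rw [card_insert_of_notMem hxA', card_insert_of_notMem hxB', hcA, hcard']
      · simp only
        rw [card_insert_of_notMem hxA', hcA]
        omega
      · simp only
        linarith [not_lt.1 hf]
  refine (signAvg_mono key).trans ?_
  rw [signAvg_add, signAvg_mul, signAvg_const]
  have hv0 : 0 ≤ v / 2 := by positivity
  have := mul_le_mul_of_nonneg_left hquad hv0
  linarith

/-- After enough further rows, the columns of some heavy minor lie in `A ∪ X`. -/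
lemma cols_phase (hμ : 0 ≤ μ) (hX : X.Nonempty) (P₁ F : Finset (Fin n)) (hXP : X ⊆ P₁)
    (hdisj : Disjoint P₁ F) {k : ℕ} (hk : P₁.card ≤ X.card + a₀ + k) :
    matAvg n (fun M => ind ((∃ s, IsMinor X a₀ μ P₁ M s) ∧
      ¬ ∃ s, IsMinor X a₀ μ (P₁ ∪ F) M s ∧ s.2 ⊆ s.1 ∪ X)) ≤ (7 / 8) ^ F.card * 2 ^ k := by
  have hV : ∀ s : Finset (Fin n) × Finset (Fin n), 0 ≤ (2 : ℝ) ^ (extraCols X s).card - 1 :=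
    fun s => sub_nonneg.2 (one_le_pow₀ (by norm_num))
  obtain ⟨hrun, hper⟩ := run (IsMinor X a₀ μ)
    (fun _ s => (2 : ℝ) ^ (extraCols X s).card - 1) P₁ F hdisj (κ := 7 / 8) (b := 0) (by norm_num)
    le_rfl (fun P M x v s _ hx => isMinor_setRow v s hx)
    (fun P M x s _ hx h => isMinor_insert hμ hx h)
    (fun P M x s hP _ hx h => cols_step hμ hX (hXP.trans hP) hx h)
    (fun i => (7 / 8) ^ i * 2 ^ k) (fun i => by rw [pow_succ]; linarith)
    (by
      rw [pow_zero, one_mul, ← matAvg_const (n := n) (2 ^ k)]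
      refine matAvg_mono fun M => ?_
      by_cases hG : ∃ s, IsMinor X a₀ μ P₁ M s
      · rw [ind_true hG, one_mul]
        obtain ⟨s, hs⟩ := hG
        refine (best_le hV hs).trans ?_
        have hle : (extraCols X s).card ≤ k := by
          have hsub : extraCols X s ⊆ (P₁ \ X) \ s.1 := by
            intro y hy
            simp only [extraCols, mem_sdiff] at hy ⊢
            exact ⟨⟨hs.2.1 hy.1.1, hy.2⟩, hy.1.2⟩
          have := card_le_card hsub
          rw [card_sdiff_of_subset hs.1, card_sdiff_of_subset hXP] at this
          have := hs.2.2.2.1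
          omega
        have : (2 : ℝ) ^ (extraCols X s).card ≤ 2 ^ k := pow_le_pow_right₀ (by norm_num) hle
        linarith
      · rw [ind_false hG, zero_mul]
        positivity)
  refine le_trans (matAvg_mono fun M => ?_) hrun
  by_cases hG : ∃ s, IsMinor X a₀ μ P₁ M s
  · rw [ind_true hG, one_mul]
    by_cases hS : ∃ s, IsMinor X a₀ μ (P₁ ∪ F) M s ∧ s.2 ⊆ s.1 ∪ X
    · rw [ind_false fun h => h.2 hS]
      exact best_nonneg hV
    · rw [ind_true ⟨hG, hS⟩]
      obtain ⟨s, hs⟩ := hG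
      obtain ⟨t, ht, hbt⟩ := best_attained (V := fun s => (2 : ℝ) ^ (extraCols X s).card - 1)
        ⟨s, hper M s hs⟩
      rw [← hbt]
      have hne : (extraCols X t).Nonempty := by
        rw [nonempty_iff_ne_empty]
        intro h0
        refine hS ⟨t, ht, fun y hy => ?_⟩
        by_contra hcon
        rw [mem_union, not_or] at hcon
        have : y ∈ extraCols X t := by
          simp only [extraCols, mem_sdiff]
          exact ⟨⟨hy, hcon.1⟩, hcon.2⟩
        rw [h0] at this
        exact notMem_empty _ this
      have : (2 : ℝ) ^ 1 ≤ 2 ^ (extraCols X t).card :=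
        pow_le_pow_right₀ (by norm_num) (card_pos.2 hne)
      linarith
  · rw [ind_false fun h => hG h.1, ind_false hG, zero_mul]

end phase2

/-! ### Absorbing all remaining rows -/

section phase3
variable {n : ℕ}

/-- A heavy minor whose columns lie in `A ∪ X`. -/
def IsNested (X : Finset (Fin n)) (a₀ : ℕ) (μ : ℝ) (P : Finset (Fin n))
    (M : Matrix (Fin n) (Fin n) ℝ) (s : Finset (Fin n) × Finset (Fin n)) : Prop :=
  IsMinor X a₀ μ P M s ∧ s.2 ⊆ s.1 ∪ X

/-- The columns available for extending a nested minor. -/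
def freeCols (X : Finset (Fin n)) (s : Finset (Fin n) × Finset (Fin n)) : Finset (Fin n) :=
  (s.1 ∪ X) \ s.2

/-- The revealed indices outside `X` that are not rows yet. -/
def missing (X P : Finset (Fin n)) (s : Finset (Fin n) × Finset (Fin n)) : Finset (Fin n) :=
  (P \ X) \ s.1

variable {X P : Finset (Fin n)} {a₀ : ℕ} {μ : ℝ} {M : Matrix (Fin n) (Fin n) ℝ} {x c d : Fin n}
  {A B : Finset (Fin n)}

lemma isNested_setRow (v : Fin n → ℝ) (s : Finset (Fin n) × Finset (Fin n)) (hx : x ∉ P) :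
    IsNested X a₀ μ P (setRow M x v) s ↔ IsNested X a₀ μ P M s := by
  unfold IsNested
  rw [isMinor_setRow v s hx]

lemma isNested_insert (hμ : 0 ≤ μ) {s : Finset (Fin n) × Finset (Fin n)} (hx : x ∉ P)
    (h : IsNested X a₀ μ P M s) : IsNested X a₀ μ (insert x P) M s :=
  ⟨isMinor_insert hμ hx h.1, h.2⟩

lemma card_freeCols {s : Finset (Fin n) × Finset (Fin n)} (h : IsNested X a₀ μ P M s) :
    (freeCols X s).card = X.card := by
  have hdisj : Disjoint s.1 X := disjoint_left.2 fun y hy => (mem_sdiff.1 (h.1.1 hy)).2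
  unfold freeCols
  rw [card_sdiff_of_subset h.2, card_union_of_disjoint hdisj, h.1.2.2.1]
  omega

/-- The disjointness facts needed to extend a nested minor by a new index `x`. -/
lemma nested_facts (h : IsNested X a₀ μ P M (A, B)) (hXP : X ⊆ P) (hx : x ∉ P) :
    x ∉ A ∧ x ∉ B ∧ x ∉ freeCols X (A, B) ∧ Disjoint (freeCols X (A, B)) B ∧
      ∀ c ∈ missing X P (A, B), c ≠ x ∧ c ∉ A ∧ c ∉ B ∧ c ∉ freeCols X (A, B) := by
  obtain ⟨⟨h1, h2, -, -, -⟩, h3⟩ := h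
  simp only at h1 h2 h3
  have hA : A ⊆ P := h1.trans sdiff_subset
  refine ⟨fun h => hx (hA h), fun h => hx (h2 h), ?_, sdiff_disjoint, ?_⟩
  · intro h
    exact hx (union_subset hA hXP (mem_sdiff.1 h).1)
  · intro c hc
    simp only [missing, mem_sdiff] at hc
    have hc2 : c ∉ A ∪ X := by simp [hc.2, hc.1.2]
    exact ⟨fun h => hx (h ▸ hc.1.1), hc.2, fun h => hc2 (h3 h), fun h => hc2 (mem_sdiff.1 h).1⟩

lemma nested_row {M' : Matrix (Fin n) (Fin n) ℝ} (hμ : 0 ≤ μ) (h : IsNested X a₀ μ P M (A, B))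
    (hXP : X ⊆ P) (hx : x ∉ P) (hd : d ∈ freeCols X (A, B))
    (hbig : μ / 2 ^ P.card ≤ |permOn M' (insert x A) (insert d B)|) :
    IsNested X a₀ μ (insert x P) M' (insert x A, insert d B) := by
  obtain ⟨hxA, -, -, -, -⟩ := nested_facts h hXP hx
  obtain ⟨⟨h1, h2, h3, h4, -⟩, h6⟩ := h
  simp only at h1 h2 h3 h4 h6
  simp only [freeCols, mem_sdiff, mem_union] at hd
  have hA : A ⊆ P := h1.trans sdiff_subset
  have hthr := thr_insert hμ hx
  refine ⟨⟨?_, ?_, ?_, ?_, by simp only; linarith⟩, ?_⟩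
  · intro y hy
    simp only [mem_insert, mem_sdiff] at hy ⊢
    rcases hy with rfl | hy
    · exact ⟨Or.inl rfl, fun h => hx (hXP h)⟩
    · exact ⟨Or.inr (hA hy), (mem_sdiff.1 (h1 hy)).2⟩
  · intro y hy
    simp only [mem_insert] at hy ⊢
    rcases hy with rfl | hy
    · exact Or.inr (hd.1.elim (fun h => hA h) fun h => hXP h)
    · exact Or.inr (h2 hy)
  · simp only
    rw [card_insert_of_notMem hxA, card_insert_of_notMem hd.2, h3]
  · simp only
    rw [card_insert_of_notMem hxA]
    omega
  · intro y hy
    have h7 : y ∈ B → y ∈ A ∪ X := fun h => h6 h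
    simp only [mem_insert, mem_union] at hy h7 ⊢
    rcases hy with rfl | hy
    · tauto
    · tauto

lemma nested_both {M' : Matrix (Fin n) (Fin n) ℝ} (hμ : 0 ≤ μ) (h : IsNested X a₀ μ P M (A, B))
    (hXP : X ⊆ P) (hx : x ∉ P) (hd : d ∈ freeCols X (A, B)) (hc : c ∈ missing X P (A, B))
    (hbig : μ / 2 ^ P.card ≤ |permOn M' (insert x (insert c A)) (insert x (insert d B))|) :
    IsNested X a₀ μ (insert x P) M' (insert x (insert c A), insert x (insert d B)) := by
  obtain ⟨hxA, hxB, hxf, -, hcf⟩ := nested_facts h hXP hx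
  obtain ⟨hcx, hcA, -, -⟩ := hcf c hc
  obtain ⟨⟨h1, h2, h3, h4, -⟩, h6⟩ := h
  simp only at h1 h2 h3 h4 h6
  have hxd : x ≠ d := fun h => hxf (h ▸ hd)
  simp only [freeCols, mem_sdiff, mem_union] at hd
  simp only [missing, mem_sdiff] at hc
  have hA : A ⊆ P := h1.trans sdiff_subset
  have hthr := thr_insert hμ hx
  have hxA' : x ∉ insert c A := by simp [hxA, hcx.symm]
  have hxB' : x ∉ insert d B := by simp [hxB, hxd]
  refine ⟨⟨?_, ?_, ?_, ?_, by simp only; linarith⟩, ?_⟩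
  · intro y hy
    simp only [mem_insert, mem_sdiff] at hy ⊢
    rcases hy with rfl | rfl | hy
    · exact ⟨Or.inl rfl, fun h => hx (hXP h)⟩
    · exact ⟨Or.inr hc.1.1, hc.1.2⟩
    · exact ⟨Or.inr (hA hy), (mem_sdiff.1 (h1 hy)).2⟩
  · intro y hy
    simp only [mem_insert] at hy ⊢
    rcases hy with rfl | rfl | hy
    · exact Or.inl rfl
    · exact Or.inr (hd.1.elim (fun h => hA h) fun h => hXP h)
    · exact Or.inr (h2 hy)
  · simp only
    rw [card_insert_of_notMem hxA', card_insert_of_notMem hxB', card_insert_of_notMem hcA,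
      card_insert_of_notMem hd.2, h3]
  · simp only
    rw [card_insert_of_notMem hxA', card_insert_of_notMem hcA]
    omega
  · intro y hy
    have h7 : y ∈ B → y ∈ A ∪ X := fun h => h6 h
    simp only [mem_insert, mem_union] at hy h7 ⊢
    rcases hy with rfl | rfl | hy <;> tauto

lemma missing_stay : (missing X (insert x P) (A, B)).card ≤ (missing X P (A, B)).card + 1 := by
  refine (card_le_card (t := insert x (missing X P (A, B))) fun y hy => ?_).trans
    (card_insert_le _ _)
  simp only [missing, mem_sdiff, mem_insert] at hy ⊢
  tauto

lemma missing_row (B' : Finset (Fin n)) :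
    (missing X (insert x P) (insert x A, B')).card ≤ (missing X P (A, B)).card := by
  refine card_le_card fun y hy => ?_
  simp only [missing, mem_sdiff, mem_insert] at hy ⊢
  tauto

lemma missing_both (B' : Finset (Fin n)) (hc : c ∈ missing X P (A, B)) :
    (missing X (insert x P) (insert x (insert c A), B')).card + 1 ≤
      (missing X P (A, B)).card := by
  have hpos : 0 < (missing X P (A, B)).card := card_pos.2 ⟨c, hc⟩
  have : missing X (insert x P) (insert x (insert c A), B') ⊆ (missing X P (A, B)).erase c := by
    intro y hy
    simp only [missing, mem_sdiff, mem_insert, mem_erase] at hy ⊢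
    tauto
  have := card_le_card this
  rw [card_erase_of_mem hc] at this
  omega

/-- A new index `x` is added to the rows by means of a free column, and with probability about one
half a missing row `c` is absorbed as well, using the column `x`. -/
lemma rows_step (hμ : 0 ≤ μ) (hXP : X ⊆ P) (hX : 7 ≤ X.card) (hx : x ∉ P)
    {s : Finset (Fin n) × Finset (Fin n)} (h : IsNested X a₀ μ P M s) :
    signAvg (fun ξ => best (IsNested X a₀ μ (insert x P) (setRow M x (sv ξ)))
      (fun s => (9 / 4 : ℝ) ^ (missing X (insert x P) s).card)) ≤
      3 / 4 * (9 / 4 : ℝ) ^ (missing X P s).card + 3 / 2 := by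
  obtain ⟨A, B⟩ := s
  have hV : ∀ s : Finset (Fin n) × Finset (Fin n),
    0 ≤ (9 / 4 : ℝ) ^ (missing X (insert x P) s).card := fun s => by positivity
  set v := (9 / 4 : ℝ) ^ (missing X P (A, B)).card with hv
  have hv0 : 0 < v := by positivity
  have hstay : ∀ ξ : Fin n → Bool, best (IsNested X a₀ μ (insert x P) (setRow M x (sv ξ)))
      (fun s => (9 / 4 : ℝ) ^ (missing X (insert x P) s).card) ≤ 9 / 4 * v := by
    intro ξ
    refine (best_le hV (isNested_insert hμ hx ((isNested_setRow _ _ hx).2 h))).trans ?_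
    rw [hv, mul_comm, ← pow_succ]
    exact pow_le_pow_right₀ (by norm_num) missing_stay
  by_cases hE : missing X P (A, B) = ∅
  · refine (signAvg_mono hstay).trans ?_
    rw [signAvg_const, hv, hE]
    norm_num
  obtain ⟨c, hc⟩ := nonempty_iff_ne_empty.2 hE
  obtain ⟨hxA, hxB, hxf, hfB, hcf⟩ := nested_facts h hXP hx
  obtain ⟨hcx, hcA, hcB, hcD⟩ := hcf c hc
  refine (rowcol_avg M hxA hxB hxf hfB h.1.2.2.2.2 hcx hcA hcB hcD _ (α₀ := 9 / 4 * v) (α₁ := v)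
    (α₂ := 4 / 9 * v) (by positivity) (by positivity) (by linarith) hstay ?_ ?_).trans ?_
  · intro ξ d hd hbig
    refine (best_le hV (nested_row hμ h hXP hx hd hbig)).trans ?_
    exact pow_le_pow_right₀ (by norm_num) (missing_row _)
  · intro ξ d hd hbig
    refine (best_le hV (nested_both hμ h hXP hx hd hc hbig)).trans ?_
    have : (9 / 4 : ℝ) ^ ((missing X (insert x P) (insert x (insert c A), insert x (insert d B))).card
        + 1) ≤ v := pow_le_pow_right₀ (by norm_num) (missing_both _ hc)
    rw [pow_succ] at this
    linarith
  · rw [card_freeCols h]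
    have h7 : (1 / 2 : ℝ) ^ X.card ≤ (1 / 2) ^ 7 :=
      pow_le_pow_of_le_one (by norm_num) (by norm_num) hX
    have : 9 / 4 * v * (1 / 2 : ℝ) ^ X.card ≤ 9 / 4 * v * (1 / 2) ^ 7 := by gcongr
    linarith

/-- After enough further rows, the number of missing rows of the best nested minor has a bounded
exponential moment. -/
lemma rows_phase (hμ : 0 ≤ μ) (P₂ F : Finset (Fin n)) (hXP : X ⊆ P₂) (hX : 7 ≤ X.card)
    (hdisj : Disjoint P₂ F) {k : ℕ} (hk : P₂.card ≤ X.card + a₀ + k) :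
    matAvg n (fun M => ind (∃ s, IsNested X a₀ μ P₂ M s) *
      best (IsNested X a₀ μ (P₂ ∪ F) M) (fun s => (9 / 4 : ℝ) ^ (missing X (P₂ ∪ F) s).card)) ≤
        (3 / 4) ^ F.card * (9 / 4) ^ k + 6 ∧
      ∀ M s, IsNested X a₀ μ P₂ M s → IsNested X a₀ μ (P₂ ∪ F) M s := by
  refine run (IsNested X a₀ μ)
    (fun P s => (9 / 4 : ℝ) ^ (missing X P s).card) P₂ F hdisj (κ := 3 / 4) (b := 3 / 2)
    (by norm_num) (by norm_num) (fun P M x v s _ hx => isNested_setRow v s hx)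
    (fun P M x s _ hx h => isNested_insert hμ hx h)
    (fun P M x s hP _ hx h => rows_step hμ (hXP.trans hP) hX hx h)
    (fun i => (3 / 4) ^ i * (9 / 4) ^ k + 6) (fun i => by rw [pow_succ]; linarith) ?_
  rw [pow_zero, one_mul, ← matAvg_const (n := n) ((9 / 4) ^ k + 6)]
  refine matAvg_mono fun M => ?_
  by_cases hG : ∃ s, IsNested X a₀ μ P₂ M s
  · rw [ind_true hG, one_mul]
    obtain ⟨s, hs⟩ := hG
    refine (best_le (fun s => by positivity) hs).trans ?_
    have hle : (missing X P₂ s).card ≤ k := by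
      unfold missing
      rw [card_sdiff_of_subset hs.1.1, card_sdiff_of_subset hXP]
      have := hs.1.2.2.2.1
      omega
    have : (9 / 4 : ℝ) ^ (missing X P₂ s).card ≤ (9 / 4) ^ k :=
      pow_le_pow_right₀ (by norm_num) hle
    linarith
  · rw [ind_false hG, zero_mul]
    positivity

end phase3

/-! ### The last rows: steering the unused columns into `Y` -/

section phase4
variable {n : ℕ}

/-- States of the last phase: a nested minor, or the failure state `none`, which is always
available. -/
def LastValid (X : Finset (Fin n)) (a₀ : ℕ) (μ : ℝ) (P : Finset (Fin n))
    (M : Matrix (Fin n) (Fin n) ℝ) : Option (Finset (Fin n) × Finset (Fin n)) → Prop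
  | none => True
  | some s => IsNested X a₀ μ P M s

/-- The work left to do: each missing row counts twice, as absorbing it may create a free column
outside `Y`; each free column outside `Y` counts once. -/
def work (X Y P : Finset (Fin n)) (s : Finset (Fin n) × Finset (Fin n)) : ℕ :=
  2 * (missing X P s).card + (freeCols X s \ Y).card

/-- The potential of the last phase. It is `1` at the failure state, and vanishes at a minor exactly
when no work is left. The factor `5/6` for each index of `Y` still to come absorbs the
average decrease of `(3/2)^work`, so that the potential is a supermartingale up to an additive
error. -/
noncomputable def lastPot (X Y P : Finset (Fin n)) :
    Option (Finset (Fin n) × Finset (Fin n)) → ℝ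
  | none => 1
  | some s => ((3 / 2) ^ work X Y P s - 1) * (5 / 6) ^ (Y \ P).card

variable {X Y P : Finset (Fin n)} {a₀ : ℕ} {μ : ℝ} {M : Matrix (Fin n) (Fin n) ℝ} {x c d : Fin n}
  {A B : Finset (Fin n)}

lemma lastPot_nonneg (s : Option (Finset (Fin n) × Finset (Fin n))) : 0 ≤ lastPot X Y P s := by
  cases s with
  | none => exact zero_le_one
  | some s =>
    exact mul_nonneg (sub_nonneg.2 (one_le_pow₀ (by norm_num))) (by positivity)

lemma lastPot_le (hxY : x ∈ Y) (hx : x ∉ P) {s : Finset (Fin n) × Finset (Fin n)} {k : ℕ}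
    (h : work X Y (insert x P) s ≤ k) :
    lastPot X Y (insert x P) (some s) ≤ ((3 / 2) ^ k - 1) * (6 / 5 * (5 / 6) ^ (Y \ P).card) := by
  have hy : (Y \ P).card = (Y \ insert x P).card + 1 := by
    have : Y \ P = insert x (Y \ insert x P) := by
      ext y
      simp only [mem_sdiff, mem_insert]
      constructor
      · intro h
        by_cases hyx : y = x
        · exact Or.inl hyx
        · exact Or.inr ⟨h.1, by tauto⟩
      · rintro (rfl | h)
        · exact ⟨hxY, hx⟩
        · tauto
    rw [this, card_insert_of_notMem (by simp)]
  have e : (6 / 5 * (5 / 6) ^ (Y \ P).card : ℝ) = (5 / 6) ^ (Y \ insert x P).card := by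
    rw [hy, pow_succ]; ring
  rw [e]
  unfold lastPot
  have : (3 / 2 : ℝ) ^ work X Y (insert x P) s ≤ (3 / 2) ^ k :=
    pow_le_pow_right₀ (by norm_num) h
  exact mul_le_mul_of_nonneg_right (by linarith) (by positivity)

lemma free_row (hxY : x ∈ Y) :
    freeCols X (insert x A, insert d B) \ Y ⊆ (freeCols X (A, B) \ Y).erase d := by
  intro y hy
  simp only [freeCols, mem_sdiff, mem_union, mem_insert, mem_erase] at hy ⊢
  have : y ≠ x := fun h => hy.2 (h ▸ hxY)
  tauto

lemma work_row (hxY : x ∈ Y) :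
    work X Y (insert x P) (insert x A, insert d B) ≤ work X Y P (A, B) := by
  have h1 := card_le_card ((free_row (X := X) (A := A) (B := B) (d := d) hxY).trans
    (erase_subset _ _))
  have h2 := missing_row (x := x) (X := X) (P := P) (A := A) (B := B) (insert d B)
  unfold work
  omega

lemma work_row_good (hxY : x ∈ Y) (hd : d ∈ freeCols X (A, B) \ Y) :
    work X Y (insert x P) (insert x A, insert d B) + 1 ≤ work X Y P (A, B) := by
  have h1 := card_le_card (free_row (X := X) (A := A) (B := B) (d := d) hxY)
  have h2 := missing_row (x := x) (X := X) (P := P) (A := A) (B := B) (insert d B)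
  have h3 : 0 < (freeCols X (A, B) \ Y).card := card_pos.2 ⟨d, hd⟩
  rw [card_erase_of_mem hd] at h1
  unfold work
  omega

lemma work_both (hfree : freeCols X (A, B) \ Y = ∅) (hc : c ∈ missing X P (A, B)) :
    work X Y (insert x P) (insert x (insert c A), insert x (insert d B)) + 1 ≤
      work X Y P (A, B) := by
  have h1 : freeCols X (insert x (insert c A), insert x (insert d B)) \ Y ⊆ {c} := by
    intro y hy
    by_contra hyc
    rw [mem_singleton] at hyc
    have : y ∈ freeCols X (A, B) \ Y := by
      simp only [freeCols, mem_sdiff, mem_union, mem_insert] at hy ⊢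
      tauto
    rw [hfree] at this
    exact notMem_empty _ this
  have h1' := card_le_card h1
  rw [card_singleton] at h1'
  have h2 := missing_both (x := x) (insert x (insert d B)) hc
  unfold work
  omega

/-- A new row `x` from `Y` uses up, with probability at least one half, a prescribed free column
outside `Y`. If there is no such column, a missing row is absorbed with probability about one half.
All free columns fail with probability at most `2 ^ (-|X|)`. -/
lemma last_step (hμ : 0 ≤ μ) (hXP : X ⊆ P) (hxY : x ∈ Y) (hx : x ∉ P)
    {s : Option (Finset (Fin n) × Finset (Fin n))} (h : LastValid X a₀ μ P M s) :
    signAvg (fun ξ => best (LastValid X a₀ μ (insert x P) (setRow M x (sv ξ)))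
      (lastPot X Y (insert x P))) ≤ 1 * lastPot X Y P s + (1 / 2) ^ X.card := by
  have hone : ∀ ξ : Fin n → Bool, best (LastValid X a₀ μ (insert x P) (setRow M x (sv ξ)))
      (lastPot X Y (insert x P)) ≤ 1 := fun ξ =>
    best_le (s := none) lastPot_nonneg trivial
  cases s with
  | none =>
    refine (signAvg_mono hone).trans ?_
    rw [signAvg_const]
    have : (0 : ℝ) ≤ (1 / 2) ^ X.card := by positivity
    simp only [lastPot]
    linarith
  | some s =>
    obtain ⟨A, B⟩ := s
    have h' : IsNested X a₀ μ P M (A, B) := h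
    obtain ⟨hxA, hxB, hxf, hfB, hcf⟩ := nested_facts h' hXP hx
    have hl := h'.1.2.2.2.2
    simp only at hl
    set k := work X Y P (A, B) with hk
    set l := μ / 2 ^ P.card with hldef
    set z : ℝ := (5 / 6) ^ (Y \ P).card with hz
    have hz0 : 0 < z := by positivity
    have hrow : ∀ ξ : Fin n → Bool, ∀ d ∈ freeCols X (A, B), ∀ i,
        work X Y (insert x P) (insert x A, insert d B) ≤ i →
        l ≤ |permOn (setRow M x (sv ξ)) (insert x A) (insert d B)| →
        best (LastValid X a₀ μ (insert x P) (setRow M x (sv ξ))) (lastPot X Y (insert x P)) ≤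
          ((3 / 2) ^ i - 1) * (6 / 5 * z) := by
      intro ξ d hd i hi hbig
      exact (best_le (s := some (insert x A, insert d B)) lastPot_nonneg
        (nested_row hμ h' hXP hx hd hbig)).trans (lastPot_le hxY hx hi)
    have hpot : lastPot X Y P (some (A, B)) = ((3 / 2) ^ k - 1) * z := rfl
    rw [hpot, one_mul]
    have hrf := row_fail M hxA hxB hxf hfB hl
    rw [card_freeCols h'] at hrf
    by_cases hF : freeCols X (A, B) \ Y = ∅
    · by_cases hm : missing X P (A, B) = ∅
      · -- no work is left, and adding the row `x` creates none
        have hk0 : k = 0 := by rw [hk, work, hF, hm]; rfl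
        refine (signAvg_mono fun ξ => ?_).trans (hrf.trans (by rw [hk0]; norm_num))
        by_cases hc : ∀ d ∈ freeCols X (A, B),
            |permOn (setRow M x (sv ξ)) (insert x A) (insert d B)| < l
        · rw [ind_true hc]
          exact hone ξ
        · rw [ind_false hc]
          push Not at hc
          obtain ⟨d, hd, hbig⟩ := hc
          refine (hrow ξ d hd 0 ((work_row hxY).trans hk0.le) hbig).trans (by norm_num)
      · obtain ⟨c, hc⟩ := nonempty_iff_ne_empty.2 hm
        obtain ⟨hcx, hcA, hcB, hcD⟩ := hcf c hc
        obtain ⟨i, hi⟩ : ∃ i, k = i + 1 := by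
          have h0 := work_both (x := x) (d := x) hF hc
          exact ⟨k - 1, by omega⟩
        have hR : (1 : ℝ) ≤ (3 / 2) ^ i := one_le_pow₀ (by norm_num)
        have hks : (3 / 2 : ℝ) ^ k = 3 / 2 * (3 / 2) ^ i := by rw [hi, pow_succ, mul_comm]
        refine (rowcol_avg M hxA hxB hxf hfB hl hcx hcA hcB hcD _ (α₀ := 1)
          (α₁ := ((3 / 2) ^ k - 1) * (6 / 5 * z)) (α₂ := ((3 / 2) ^ i - 1) * (6 / 5 * z))
          zero_le_one (mul_nonneg (by linarith) (by positivity)) ?_ hone ?_ ?_).trans ?_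
        · rw [hks]
          gcongr
          linarith
        · exact fun ξ d hd hbig => hrow ξ d hd k (work_row hxY) hbig
        · intro ξ d hd hbig
          refine (best_le (s := some (insert x (insert c A), insert x (insert d B)))
            lastPot_nonneg (nested_both hμ h' hXP hx hd hc hbig)).trans (lastPot_le hxY hx ?_)
          have h0 := work_both (x := x) (d := d) hF hc
          omega
        · rw [card_freeCols h', hks]
          nlinarith
    · obtain ⟨d₀, hd₀⟩ := nonempty_iff_ne_empty.2 hF
      have hd₀' := (mem_sdiff.1 hd₀).1
      obtain ⟨i, hi⟩ : ∃ i, k = i + 1 := by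
        have h0 := work_row_good (P := P) hxY hd₀
        exact ⟨k - 1, by omega⟩
      have hR : (1 : ℝ) ≤ (3 / 2) ^ i := one_le_pow₀ (by norm_num)
      have hks : (3 / 2 : ℝ) ^ k = 3 / 2 * (3 / 2) ^ i := by rw [hi, pow_succ, mul_comm]
      have hrf0 := row_fail M (D := {d₀}) hxA hxB (by
        rw [mem_singleton]; exact fun h => hxf (h ▸ hd₀'))
        (disjoint_of_subset_left (singleton_subset_iff.2 hd₀') hfB) hl
      rw [card_singleton, pow_one] at hrf0
      have key : ∀ ξ : Fin n → Bool,
          best (LastValid X a₀ μ (insert x P) (setRow M x (sv ξ))) (lastPot X Y (insert x P)) ≤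
          ind (∀ d ∈ freeCols X (A, B),
            |permOn (setRow M x (sv ξ)) (insert x A) (insert d B)| < l) +
          (((3 / 2) ^ i - 1) * (6 / 5 * z) + ((3 / 2) ^ i / 2 * (6 / 5 * z)) *
            ind (∀ d ∈ ({d₀} : Finset (Fin n)),
              |permOn (setRow M x (sv ξ)) (insert x A) (insert d B)| < l)) := by
        intro ξ
        have hn1 : 0 ≤ ((3 / 2) ^ i - 1) * (6 / 5 * z) :=
          mul_nonneg (by linarith) (by positivity)
        have hn2 : 0 ≤ ((3 / 2) ^ i / 2 * (6 / 5 * z)) := by positivity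
        by_cases hc : ∀ d ∈ freeCols X (A, B),
            |permOn (setRow M x (sv ξ)) (insert x A) (insert d B)| < l
        · rw [ind_true hc]
          have := hone ξ
          have := mul_nonneg hn2 (ind_nonneg (∀ d ∈ ({d₀} : Finset (Fin n)),
              |permOn (setRow M x (sv ξ)) (insert x A) (insert d B)| < l))
          linarith
        · rw [ind_false hc]
          by_cases hc0 : ∀ d ∈ ({d₀} : Finset (Fin n)),
              |permOn (setRow M x (sv ξ)) (insert x A) (insert d B)| < l
          · rw [ind_true hc0]
            push Not at hc
            obtain ⟨d, hd, hbig⟩ := hc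
            refine (hrow ξ d hd k (work_row hxY) hbig).trans (le_of_eq ?_)
            rw [hks]
            ring
          · rw [ind_false hc0]
            push Not at hc0
            obtain ⟨d, hd, hbig⟩ := hc0
            obtain rfl := mem_singleton.1 hd
            have h0 := work_row_good (P := P) hxY hd₀
            refine (hrow ξ d hd₀' i (by omega) hbig).trans (le_of_eq ?_)
            ring
      refine (signAvg_mono key).trans ?_
      rw [signAvg_add, signAvg_add, signAvg_mul ((3 / 2) ^ i / 2 * (6 / 5 * z)), signAvg_const,
        hks]
      have hn2 : 0 ≤ ((3 / 2) ^ i / 2 * (6 / 5 * z)) := by positivity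
      have := mul_le_mul_of_nonneg_left hrf0 hn2
      nlinarith

/-- Once the rows in `Y` are revealed as well, some nested minor with all rows off `X` has all its
unused columns in `Y`. Here `G` is an event on which a nested minor exists beforehand. -/
lemma last_phase (hμ : 0 ≤ μ) (P₃ : Finset (Fin n)) (hXP : X ⊆ P₃) (hdisj : Disjoint P₃ Y)
    (huniv : P₃ ∪ Y = univ) (G : Matrix (Fin n) (Fin n) ℝ → Prop)
    (hG : ∀ M, G M → ∃ s, IsNested X a₀ μ P₃ M s) {e₁ e₂ : ℝ}
    (h1 : matAvg n (fun M => ind (¬ G M)) ≤ e₁)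
    (h2 : matAvg n (fun M => ind (G M) *
      best (IsNested X a₀ μ P₃ M) (fun s => (9 / 4 : ℝ) ^ (missing X P₃ s).card)) ≤ e₂) :
    matAvg n (fun M => ind (¬ ∃ B : Finset (Fin n), B.card = n - X.card ∧ Yᶜ ⊆ B ∧
      μ / 2 ^ n ≤ |permOn M Xᶜ B|)) ≤
      2 * (e₁ + (3 / 2) ^ X.card * (5 / 6) ^ Y.card * e₂ + Y.card * (1 / 2) ^ X.card) := by
  set q : ℝ := (3 / 2) ^ X.card * (5 / 6) ^ Y.card with hq
  have hrun := (run (LastValid X a₀ μ) (lastPot X Y) P₃ Y hdisj (κ := 1) (b := (1 / 2) ^ X.card)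
    zero_le_one (by positivity)
    (by
      intro P M x v s _ hx
      cases s with
      | none => exact Iff.rfl
      | some s => exact isNested_setRow v s hx)
    (by
      intro P M x s _ hx h
      cases s with
      | none => trivial
      | some s => exact isNested_insert hμ hx h)
    (fun P M x s hP hxY hx h => last_step hμ (hXP.trans hP) hxY hx h)
    (fun k => (e₁ + q * e₂) + k * (1 / 2) ^ X.card)
    (fun k => by push_cast; linarith)
    (by
      simp only [Nat.cast_zero, zero_mul, add_zero]
      have hq0 : 0 ≤ q := by positivity
      have h3 := mul_le_mul_of_nonneg_left h2 hq0
      rw [← matAvg_mul] at h3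
      refine le_trans ?_ (add_le_add h1 h3)
      rw [← matAvg_add]
      refine matAvg_mono fun M => ?_
      have hT : ∃ s, LastValid X a₀ μ P₃ M s := ⟨none, trivial⟩
      rw [ind_true hT, one_mul]
      by_cases hc : G M
      · rw [ind_false (not_not.2 hc), ind_true hc, one_mul, zero_add]
        obtain ⟨s, hs, hbs⟩ := best_attained
          (V := fun s => (9 / 4 : ℝ) ^ (missing X P₃ s).card) (hG M hc)
        rw [← hbs]
        refine (best_le (s := some s) lastPot_nonneg hs).trans ?_
        have hYP : Y \ P₃ = Y := sdiff_eq_self_of_disjoint hdisj.symm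
        have hw : work X Y P₃ s ≤ 2 * (missing X P₃ s).card + X.card := by
          unfold work
          have := card_le_card (sdiff_subset (s := freeCols X s) (t := Y))
          rw [card_freeCols hs] at this
          omega
        have hw' : (3 / 2 : ℝ) ^ work X Y P₃ s ≤
            (3 / 2) ^ (2 * (missing X P₃ s).card + X.card) :=
          pow_le_pow_right₀ (by norm_num) hw
        have e : (3 / 2 : ℝ) ^ (2 * (missing X P₃ s).card + X.card) =
            (9 / 4) ^ (missing X P₃ s).card * (3 / 2) ^ X.card := by
          rw [pow_add, pow_mul]; norm_num
        simp only [lastPot]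
        rw [hYP, hq]
        calc ((3 / 2 : ℝ) ^ work X Y P₃ s - 1) * (5 / 6) ^ Y.card ≤
            ((9 / 4) ^ (missing X P₃ s).card * (3 / 2) ^ X.card) * (5 / 6) ^ Y.card := by
              gcongr
              linarith
          _ = _ := by ring
      · rw [ind_true hc, ind_false hc, zero_mul, mul_zero, add_zero]
        exact best_le (s := none) lastPot_nonneg trivial)).1
  rw [huniv] at hrun
  have h3 := mul_le_mul_of_nonneg_left hrun (by norm_num : (0 : ℝ) ≤ 2)
  rw [← matAvg_mul] at h3
  refine le_trans (matAvg_mono fun M => ?_) h3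
  have hT : ∃ s, LastValid X a₀ μ P₃ M s := ⟨none, trivial⟩
  rw [ind_true hT, one_mul]
  by_cases hc : ∃ B : Finset (Fin n), B.card = n - X.card ∧ Yᶜ ⊆ B ∧
      μ / 2 ^ n ≤ |permOn M Xᶜ B|
  · rw [ind_false (not_not.2 hc)]
    exact mul_nonneg (by norm_num) (best_nonneg lastPot_nonneg)
  · rw [ind_true hc]
    obtain ⟨s, hs, hbs⟩ := best_attained (valid := LastValid X a₀ μ univ M)
      (V := lastPot X Y univ) ⟨none, trivial⟩
    rw [← hbs]
    cases s with
    | none => norm_num [lastPot]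
    | some s =>
      have hwork : 1 ≤ work X Y univ s := by
        by_contra hw
        apply hc
        have hs' : IsNested X a₀ μ univ M s := hs
        have hw0 : work X Y univ s = 0 := by omega
        unfold work at hw0
        have hm : missing X univ s = ∅ := card_eq_zero.1 (by omega)
        have hf : freeCols X s \ Y = ∅ := card_eq_zero.1 (by omega)
        have hA : s.1 = Xᶜ := by
          apply subset_antisymm
          · rw [compl_eq_univ_sdiff]
            exact hs'.1.1
          · intro y hy
            by_contra hcon
            have : y ∈ missing X univ s := by
              simp only [missing, mem_sdiff, mem_univ, true_and]
              exact ⟨mem_compl.1 hy, hcon⟩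
            rw [hm] at this
            exact notMem_empty _ this
        refine ⟨s.2, ?_, ?_, ?_⟩
        · rw [← hs'.1.2.2.1, hA, card_compl, Fintype.card_fin]
        · intro y hy
          by_contra hcon
          have : y ∈ freeCols X s \ Y := by
            simp only [freeCols, mem_sdiff, mem_union]
            refine ⟨⟨?_, hcon⟩, mem_compl.1 hy⟩
            rw [hA, mem_compl]
            tauto
          rw [hf] at this
          exact notMem_empty _ this
        · rw [← hA]
          have := hs'.1.2.2.2.2
          simpa using this
      have : (3 / 2 : ℝ) ^ 1 ≤ (3 / 2) ^ work X Y univ s :=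
        pow_le_pow_right₀ (by norm_num) hwork
      have hY : Y \ univ = ∅ := sdiff_eq_empty_iff_subset.2 (subset_univ _)
      simp only [lastPot, hY, card_empty, pow_zero]
      linarith

end phase4

/-! ### The phases combined -/

section assembly

variable {n : ℕ}

lemma matAvg_ind_or {P Q R : Matrix (Fin n) (Fin n) ℝ → Prop} (h : ∀ M, P M → Q M ∨ R M) :
    matAvg n (fun M => ind (P M)) ≤
      matAvg n (fun M => ind (Q M)) + matAvg n (fun M => ind (R M)) := by
  rw [← matAvg_add]
  refine matAvg_mono fun M => ?_
  by_cases hP : P M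
  · rw [ind_true hP]
    rcases h M hP with h | h
    · rw [ind_true h]; linarith [ind_nonneg (R M)]
    · rw [ind_true h]; linarith [ind_nonneg (Q M)]
  · rw [ind_false hP]
    exact add_nonneg (ind_nonneg _) (ind_nonneg _)

/-- The four phases combined, with all parameters still free. The index set is split as
`X ⊔ W ⊔ F₁ ⊔ F₂ ⊔ F₃ ⊔ Y`, with block sizes `|X|, w, f, N₂, N₃, |Y|`. -/
lemma four_phases {X Y : Finset (Fin n)} (hXY : Disjoint X Y) (hX7 : 7 ≤ X.card)
    {w f N₂ N₃ j s κ₀ N₀ : ℕ} {τ β μ : ℝ}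
    (hcard : X.card + Y.card + w + f + N₂ + N₃ = n)
    (hw : 0 < w) (hτ : 0 < τ) (hτ1 : τ ≤ 1) (hκ : 1 + 16 * n / (w * τ) ≤ κ₀) (hN : 1 ≤ N₀)
    (hNw : 2 * (N₀ * κ₀ ^ s) ≤ w) (hβ : 1 ≤ β) (hβη : ((23 / 24) ^ s + 24 * τ) * β ≤ 1)
    (hμ : 0 < μ) (hμN : μ ^ 2 * 2 ^ n ≤ (N₀ : ℝ) ^ (f - j)) :
    matAvg n (fun M => ind (¬ ∃ B : Finset (Fin n), B.card = n - X.card ∧ Yᶜ ⊆ B ∧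
        μ / 2 ^ n ≤ |permOn M Xᶜ B|)) ≤
      2 * ((2 ^ n / β ^ (j + 1) + (7 / 8) ^ N₂ * 2 ^ (w + j)) +
        (3 / 2) ^ X.card * (5 / 6) ^ Y.card * ((3 / 4) ^ N₃ * (9 / 4) ^ (w + j + N₂) + 6) +
        Y.card * (1 / 2) ^ X.card) := by
  have hZ : ((X ∪ Y)ᶜ).card = w + f + N₂ + N₃ := by
    have := card_compl (X ∪ Y)
    rw [card_union_of_disjoint hXY, Fintype.card_fin] at this
    omega
  obtain ⟨W, hWZ, hWc⟩ := exists_subset_card_eq (s := (X ∪ Y)ᶜ) (n := w) (by omega)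
  have hZ1 : ((X ∪ Y)ᶜ \ W).card = f + N₂ + N₃ := by
    rw [card_sdiff_of_subset hWZ]; omega
  obtain ⟨F₂, hF₂Z, hF₂c⟩ := exists_subset_card_eq (s := (X ∪ Y)ᶜ \ W) (n := N₂) (by omega)
  have hZ2 : (((X ∪ Y)ᶜ \ W) \ F₂).card = f + N₃ := by
    rw [card_sdiff_of_subset hF₂Z]; omega
  obtain ⟨F₃, hF₃Z, hF₃c⟩ := exists_subset_card_eq (s := ((X ∪ Y)ᶜ \ W) \ F₂) (n := N₃) (by omega)
  set F₁ := (((X ∪ Y)ᶜ \ W) \ F₂) \ F₃ with hF₁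
  have hF₁c : F₁.card = f := by
    rw [hF₁, card_sdiff_of_subset hF₃Z]; omega
  have hXW : Disjoint X W := by
    refine disjoint_left.2 fun a ha hb => ?_
    have := hWZ hb
    simp only [mem_compl, mem_union] at this
    tauto
  have hd1 : Disjoint (X ∪ W) F₁ := by
    refine disjoint_left.2 fun a ha hb => ?_
    simp only [hF₁, mem_sdiff, mem_compl, mem_union] at ha hb
    tauto
  have hd2 : Disjoint ((X ∪ W) ∪ F₁) F₂ := by
    refine disjoint_left.2 fun a ha hb => ?_
    have h2 := hF₂Z hb
    simp only [hF₁, mem_sdiff, mem_compl, mem_union] at ha h2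
    tauto
  have hd3 : Disjoint (((X ∪ W) ∪ F₁) ∪ F₂) F₃ := by
    refine disjoint_left.2 fun a ha hb => ?_
    have h2 := hF₃Z hb
    simp only [hF₁, mem_sdiff, mem_compl, mem_union] at ha h2
    tauto
  have hd4 : Disjoint ((((X ∪ W) ∪ F₁) ∪ F₂) ∪ F₃) Y := by
    refine disjoint_left.2 fun a ha hb => ?_
    have hX : a ∉ X := fun h => disjoint_left.1 hXY h hb
    have h1 : a ∈ (X ∪ Y)ᶜ → False := by simp [hb]
    have hW : a ∉ W := fun h => h1 (hWZ h)
    have hF2 : a ∉ F₂ := fun h => h1 (mem_sdiff.1 (hF₂Z h)).1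
    have hF3 : a ∉ F₃ := fun h => h1 (mem_sdiff.1 (mem_sdiff.1 (hF₃Z h)).1).1
    simp only [hF₁, mem_sdiff, mem_union] at ha
    tauto
  have huniv : ((((X ∪ W) ∪ F₁) ∪ F₂) ∪ F₃) ∪ Y = univ := by
    ext a
    simp only [hF₁, mem_sdiff, mem_compl, mem_union, mem_univ, iff_true]
    tauto
  have c1 : ((X ∪ W) ∪ F₁).card = X.card + w + f := by
    rw [card_union_of_disjoint hd1, card_union_of_disjoint hXW, hWc, hF₁c]
  have c2 : (((X ∪ W) ∪ F₁) ∪ F₂).card = X.card + w + f + N₂ := by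
    rw [card_union_of_disjoint hd2, c1, hF₂c]
  have hX1 : X ⊆ (X ∪ W) ∪ F₁ := subset_union_left.trans subset_union_left
  have hX2 : X ⊆ ((X ∪ W) ∪ F₁) ∪ F₂ := hX1.trans subset_union_left
  have hX3 : X ⊆ (((X ∪ W) ∪ F₁) ∪ F₂) ∪ F₃ := hX2.trans subset_union_left
  have hXne : X.Nonempty := card_pos.1 (by omega)
  -- the first phase produces a minor with rows in `F₁`
  have g1 : matAvg n (fun M => ind (¬ ∃ s, IsMinor X (f - j) μ ((X ∪ W) ∪ F₁) M s)) ≤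
      2 ^ n / β ^ (j + 1) := by
    have hg := growth_phase (X ∪ W) F₁ hd1 (N₀ := N₀) (s := s) j hw
      (by rw [card_union_of_disjoint hXW]; omega) hτ hτ1 hκ hN hNw hβ hβη
    refine le_trans (matAvg_mono fun M => ?_) (hg.trans ?_)
    · by_cases hc : ∃ A ⊆ F₁, F₁.card ≤ A.card + j ∧ (N₀ : ℝ) ^ A.card ≤ gam M ((X ∪ W) ∪ F₁) A
      · obtain ⟨A, hA, hAc, hAg⟩ := hc
        have hN1 : (1 : ℝ) ≤ N₀ := by exact_mod_cast hN
        have ha : f - j ≤ A.card := by omega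
        obtain ⟨T, hT, hTc, hTp⟩ := exists_of_gam M hμ
          (hμN.trans ((pow_le_pow_right₀ hN1 ha).trans hAg))
        rw [ind_false (not_not.2 ?_)]
        · exact ind_nonneg _
        · refine ⟨(A, T), fun a ha' => mem_sdiff.2 ⟨mem_union_right _ (hA ha'), fun hx => ?_⟩, hT,
            hTc, ha, le_trans (div_le_self hμ.le (one_le_pow₀ (by norm_num))) hTp⟩
          exact disjoint_left.1 hd1 (mem_union_left _ hx) (hA ha')
      · rw [ind_true hc]
        exact ind_le_one _
    · gcongr
      · norm_num
      · omega
  have g2 := cols_phase hμ.le hXne ((X ∪ W) ∪ F₁) F₂ hX1 hd2 (a₀ := f - j) (k := w + j)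
    (by omega)
  rw [hF₂c] at g2
  have e1 : matAvg n (fun M => ind (¬ ∃ s, IsNested X (f - j) μ (((X ∪ W) ∪ F₁) ∪ F₂) M s)) ≤
      2 ^ n / β ^ (j + 1) + (7 / 8) ^ N₂ * 2 ^ (w + j) := by
    refine le_trans (matAvg_ind_or fun M hM => ?_) (add_le_add g1 g2)
    by_cases h : ∃ s, IsMinor X (f - j) μ ((X ∪ W) ∪ F₁) M s
    · exact Or.inr ⟨h, hM⟩
    · exact Or.inl h
  obtain ⟨g3, g3'⟩ := rows_phase hμ.le (((X ∪ W) ∪ F₁) ∪ F₂) F₃ hX2 hX7 hd3 (a₀ := f - j)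
    (k := w + j + N₂) (by omega)
  rw [hF₃c] at g3
  exact last_phase hμ.le _ hX3 hd4 huniv _ (fun M ⟨s, hs⟩ => ⟨s, g3' M s hs⟩) e1 g3

end assembly

/-! ### Choice of parameters -/

section asymptotics

open Filter Topology

/-- The error terms of the four phases, which are of order at most `L (125/144)^L`, are smaller
than `(9/10)^(L+1) ≈ n^(-1/100)`. -/
lemma error_small : ∀ᶠ L : ℕ in atTop,
    8 * (2 * (1 / 2 : ℝ) ^ L + 7 * (125 / 144) ^ L + 3 * L * (1 / 2) ^ L) ≤ (9 / 10) ^ (L + 1) := by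
  have h1 : Tendsto (fun L : ℕ => (5 / 9 : ℝ) ^ L) atTop (𝓝 0) :=
    tendsto_pow_atTop_nhds_zero_of_lt_one (by norm_num) (by norm_num)
  have h2 : Tendsto (fun L : ℕ => (1250 / 1296 : ℝ) ^ L) atTop (𝓝 0) :=
    tendsto_pow_atTop_nhds_zero_of_lt_one (by norm_num) (by norm_num)
  have h3 : Tendsto (fun L : ℕ => (L : ℝ) * (5 / 9 : ℝ) ^ L) atTop (𝓝 0) :=
    tendsto_self_mul_const_pow_of_lt_one (by norm_num) (by norm_num)
  have h : Tendsto (fun L : ℕ => 16 * (5 / 9 : ℝ) ^ L + 56 * (1250 / 1296 : ℝ) ^ L +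
      24 * ((L : ℝ) * (5 / 9 : ℝ) ^ L)) atTop (𝓝 (16 * 0 + 56 * 0 + 24 * 0)) :=
    ((h1.const_mul 16).add (h2.const_mul 56)).add (h3.const_mul 24)
  have hev := h.eventually_le_const (show (16 * 0 + 56 * 0 + 24 * 0 : ℝ) < 9 / 10 by norm_num)
  filter_upwards [hev] with L hL
  have e1 : (1 / 2 : ℝ) ^ L = (9 / 10) ^ L * (5 / 9) ^ L := by rw [← mul_pow]; norm_num
  have e2 : (125 / 144 : ℝ) ^ L = (9 / 10) ^ L * (1250 / 1296) ^ L := by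
    rw [← mul_pow]; norm_num
  have := mul_le_mul_of_nonneg_left hL (show (0 : ℝ) ≤ (9 / 10) ^ L by positivity)
  rw [e1, e2, pow_succ]
  linarith

lemma rpow_ge_of_floor_log {n : ℕ} (hn : 1 ≤ n) :
    (9 / 10 : ℝ) ^ (⌊Real.log n / 10⌋₊ + 1) ≤ (n : ℝ) ^ (-(1 / 100) : ℝ) := by
  have hn0 : (0 : ℝ) < n := by exact_mod_cast hn
  have hfl := Nat.lt_floor_add_one (Real.log n / 10)
  have h9 : (9 / 10 : ℝ) ≤ Real.exp (-(1 / 10)) := by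
    have := Real.add_one_le_exp (-(1 / 10) : ℝ)
    linarith
  calc (9 / 10 : ℝ) ^ (⌊Real.log n / 10⌋₊ + 1)
      ≤ Real.exp (-(1 / 10)) ^ (⌊Real.log n / 10⌋₊ + 1) := by gcongr
    _ = Real.exp (((⌊Real.log n / 10⌋₊ + 1 : ℕ) : ℝ) * (-(1 / 10))) := (Real.exp_nat_mul _ _).symm
    _ ≤ Real.exp (Real.log n * (-(1 / 100))) := by
        refine Real.exp_le_exp.2 ?_
        push_cast
        linarith
    _ = (n : ℝ) ^ (-(1 / 100) : ℝ) := (Real.rpow_def_of_pos hn0 _).symm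

/-- `N₀ ≥ n / C` and `a₀ ≥ (1 - ε/2) n` make `N₀ ^ a₀` beat `8 ^ n n ^ ((1 - ε) n)`. -/
lemma heavy_bound {ε C : ℝ} (hC : 1 ≤ C) {n N₀ a₀ : ℕ} (hn : C ≤ n)
    (hbig : 8 * C ^ (1 - ε / 2) ≤ (n : ℝ) ^ (ε / 2)) (hN₀ : n / C ≤ N₀)
    (ha₀ : (1 - ε / 2) * n ≤ a₀) :
    ((n : ℝ) ^ ((1 - ε) * n / 2) * 2 ^ n) ^ 2 * 2 ^ n ≤ (N₀ : ℝ) ^ a₀ := by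
  have hC0 : 0 < C := by linarith
  have hn0 : (0 : ℝ) < n := by linarith
  have hnC : 1 ≤ n / C := (one_le_div hC0).2 hn
  have e1 : ((n : ℝ) ^ ((1 - ε) * n / 2)) ^ 2 = ((n : ℝ) ^ (1 - ε)) ^ n := by
    rw [← Real.rpow_natCast, ← Real.rpow_natCast, ← Real.rpow_mul hn0.le, ← Real.rpow_mul hn0.le]
    congr 1
    push_cast
    ring
  have e2 : 8 * (n : ℝ) ^ (1 - ε) ≤ (n / C) ^ (1 - ε / 2) := by
    have hCp : 0 < C ^ (1 - ε / 2) := Real.rpow_pos_of_pos hC0 _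
    rw [Real.div_rpow hn0.le hC0.le, le_div_iff₀ hCp]
    calc 8 * (n : ℝ) ^ (1 - ε) * C ^ (1 - ε / 2) = (8 * C ^ (1 - ε / 2)) * (n : ℝ) ^ (1 - ε) := by
          ring
      _ ≤ (n : ℝ) ^ (ε / 2) * (n : ℝ) ^ (1 - ε) := by gcongr
      _ = (n : ℝ) ^ (1 - ε / 2) := by
          rw [← Real.rpow_add hn0]
          congr 1
          ring
  calc ((n : ℝ) ^ ((1 - ε) * n / 2) * 2 ^ n) ^ 2 * 2 ^ n
      = (8 * (n : ℝ) ^ (1 - ε)) ^ n := by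
        rw [mul_pow, e1, mul_pow, ← pow_mul, mul_comm n 2, pow_mul, mul_assoc, ← mul_pow, mul_comm]
        norm_num
    _ ≤ ((n / C) ^ (1 - ε / 2)) ^ n := by gcongr
    _ = (n / C) ^ ((1 - ε / 2) * n) := by
        rw [← Real.rpow_natCast, ← Real.rpow_mul (by positivity)]
    _ ≤ (n / C) ^ (a₀ : ℝ) := Real.rpow_le_rpow_of_exponent_le hnC ha₀
    _ = (n / C) ^ a₀ := Real.rpow_natCast _ _
    _ ≤ (N₀ : ℝ) ^ a₀ := by gcongr

/-- The error terms in `four_phases` other than `|Y| 2 ^ (-|X|)`, for the block sizes `w = j = m`,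
`N₂ = 20 m`, `N₃ = 63 m`. -/
lemma error_terms {n q m L : ℕ} {β : ℝ} (hβ : β = 8 ^ q) (hn : n ≤ q * (m + 1)) (hLm : L ≤ m)
    (hLn : L ≤ n) :
    (2 ^ n / β ^ (m + 1) + (7 / 8) ^ (20 * m) * 2 ^ (m + m)) +
        (3 / 2) ^ L * (5 / 6) ^ (3 * L) * ((3 / 4) ^ (63 * m) * (9 / 4) ^ (m + m + 20 * m) + 6) ≤
      2 * (1 / 2 : ℝ) ^ L + 7 * (125 / 144) ^ L := by
  have hhalf : (1 / 2 : ℝ) ^ m ≤ (1 / 2) ^ L :=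
    pow_le_pow_of_le_one (by norm_num) (by norm_num) hLm
  have t1 : (2 : ℝ) ^ n / β ^ (m + 1) ≤ (1 / 2) ^ L := by
    have hb : (8 : ℝ) ^ n ≤ β ^ (m + 1) := by
      rw [hβ, ← pow_mul]
      exact pow_le_pow_right₀ (by norm_num) hn
    calc (2 : ℝ) ^ n / β ^ (m + 1) ≤ 2 ^ n / 8 ^ n := by gcongr
      _ = (1 / 4) ^ n := by rw [← div_pow]; norm_num
      _ ≤ (1 / 2) ^ n := by gcongr; norm_num
      _ ≤ (1 / 2) ^ L := pow_le_pow_of_le_one (by norm_num) (by norm_num) hLn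
  have t2 : (7 / 8 : ℝ) ^ (20 * m) * 2 ^ (m + m) ≤ (1 / 2) ^ L := by
    refine le_trans ?_ hhalf
    rw [← two_mul, pow_mul, pow_mul, ← mul_pow]
    gcongr
    norm_num
  have t3 : (3 / 4 : ℝ) ^ (63 * m) * (9 / 4) ^ (m + m + 20 * m) ≤ 1 := by
    have : m + m + 20 * m = 22 * m := by ring
    rw [this, pow_mul, pow_mul, ← mul_pow]
    exact pow_le_one₀ (by positivity) (by norm_num)
  have t4 : (3 / 2 : ℝ) ^ L * (5 / 6) ^ (3 * L) = (125 / 144) ^ L := by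
    rw [pow_mul, ← mul_pow]
    norm_num
  have t5 : (125 / 144 : ℝ) ^ L * ((3 / 4) ^ (63 * m) * (9 / 4) ^ (m + m + 20 * m) + 6) ≤
      7 * (125 / 144) ^ L := by
    rw [mul_comm]
    gcongr
    linarith
  rw [t4]
  linarith

end asymptotics

set_option maxHeartbeats 1000000 in
/-- There is a constant `c > 0` such that for every `ε > 0` the following holds for all `n`
sufficiently large. Let `L = ⌊(log n)/10⌋`, and let `X` and `Y` be disjoint subsets of the
index set with `|X| = L` and `|Y| = 3L`. Then with probability at least `1 - (1/4)·n^(-c)`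
there is a set `B` with `|B| = n - L` and `Yᶜ ⊆ B` such that `M_n[Xᶜ, B]` is
`n^((1-ε)n/2)`-heavy. -/
theorem grow_single_minor :
    ∃ c : ℝ, 0 < c ∧ ∀ ε : ℝ, 0 < ε → ∃ n₀ : ℕ, ∀ n : ℕ, n₀ ≤ n →
      ∀ X Y : Finset (Fin n), Disjoint X Y →
        X.card = ⌊Real.log n / 10⌋₊ → Y.card = 3 * ⌊Real.log n / 10⌋₊ →
        1 - (1 / 4) * (n : ℝ) ^ (-c) ≤
          prob n fun M => ∃ B : Finset (Fin n),
            B.card = n - ⌊Real.log n / 10⌋₊ ∧ Yᶜ ⊆ B ∧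
            (n : ℝ) ^ ((1 - ε) * n / 2) ≤ |permOn M Xᶜ B| := by
  refine ⟨1 / 100, by norm_num, fun ε hε => ?_⟩
  -- block sizes are multiples of `m = n / q`
  obtain ⟨q, hq⟩ := exists_nat_ge (172 / ε + 172)
  have hq172 : (172 : ℝ) ≤ q := by
    have : 0 ≤ 172 / ε := by positivity
    linarith
  have hqε : 172 / ε ≤ q := by linarith
  have hq0 : 0 < q := by
    have : (0 : ℝ) < q := by linarith
    exact_mod_cast this
  have hqR : (0 : ℝ) < q := by exact_mod_cast hq0
  set β : ℝ := 8 ^ q with hβdef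
  have hβ : 1 ≤ β := one_le_pow₀ (by norm_num)
  have hβ0 : 0 < β := by linarith
  set τ : ℝ := 1 / (48 * β) with hτdef
  have hτ : 0 < τ := by positivity
  have hτ1 : τ ≤ 1 := by
    rw [hτdef, div_le_one (by positivity)]
    linarith
  obtain ⟨s, hs⟩ := exists_pow_lt_of_lt_one (show (0 : ℝ) < 1 / (2 * β) by positivity)
    (show (23 / 24 : ℝ) < 1 by norm_num)
  have hβη : ((23 / 24) ^ s + 24 * τ) * β ≤ 1 := by
    have h1 : ((23 / 24) ^ s + 24 * τ) * β ≤ (1 / (2 * β) + 24 * τ) * β := by gcongr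
    have h2 : (1 / (2 * β) + 24 * τ) * β = 1 := by
      rw [hτdef]
      field_simp
      norm_num
    linarith
  obtain ⟨κ₀, hκ₀⟩ := exists_nat_ge (1 + 32 * q / τ)
  have hκ1 : (1 : ℝ) ≤ κ₀ := by
    have : 0 ≤ 32 * q / τ := by positivity
    linarith
  have hκ0 : 0 < κ₀ := by exact_mod_cast (show (0 : ℝ) < κ₀ by linarith)
  set D : ℕ := 2 * κ₀ ^ s with hDdef
  have hD : 0 < D := by positivity
  set C : ℝ := 4 * q * D with hCdef
  have hC : 1 ≤ C := by
    have : (1 : ℝ) ≤ D := by exact_mod_cast hD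
    rw [hCdef]
    nlinarith
  have hlogtop : Filter.Tendsto (fun n : ℕ => Real.log n / 10) Filter.atTop Filter.atTop :=
    (Real.tendsto_log_atTop.comp tendsto_natCast_atTop_atTop).atTop_div_const (by norm_num)
  have hLtop : Filter.Tendsto (fun n : ℕ => ⌊Real.log n / 10⌋₊) Filter.atTop Filter.atTop :=
    tendsto_nat_floor_atTop.comp hlogtop
  have ev1 := hLtop.eventually error_small
  have ev2 := hLtop.eventually (Filter.eventually_ge_atTop 7)
  have ev3 := ((tendsto_rpow_atTop (show 0 < ε / 2 by positivity)).comp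
    (tendsto_natCast_atTop_atTop (R := ℝ))).eventually
      (Filter.eventually_ge_atTop (8 * C ^ (1 - ε / 2)))
  have ev4 := (tendsto_natCast_atTop_atTop (R := ℝ)).eventually (Filter.eventually_ge_atTop C)
  have ev5 := (Real.isLittleO_log_id_atTop.comp_tendsto
    (tendsto_natCast_atTop_atTop (R := ℝ))).bound (show (0 : ℝ) < 1 / q by positivity)
  have ev6 := Filter.eventually_ge_atTop (q * D)
  obtain ⟨n₀, hn₀⟩ := Filter.eventually_atTop.1
    (ev1.and (ev2.and (ev3.and (ev4.and (ev5.and ev6)))))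
  refine ⟨n₀, fun n hn X Y hXY hXc hYc => ?_⟩
  obtain ⟨h1, h2, h3, h4, h5, h6⟩ := hn₀ n hn
  simp only [Function.comp_apply, id_eq, Real.norm_eq_abs] at h3 h5
  set L : ℕ := ⌊Real.log n / 10⌋₊ with hLdef
  have hnR : (0 : ℝ) < n := by linarith
  have hn1 : 1 ≤ n := by exact_mod_cast hnR
  set m : ℕ := n / q with hmdef
  have hDm : D ≤ m := (Nat.le_div_iff_mul_le hq0).2 (by rw [mul_comm]; exact h6)
  have hm0 : 0 < m := hD.trans_le hDm
  have hmq : m * q ≤ n := Nat.div_mul_le_self n q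
  have hmq' : n < (m + 1) * q := by
    have := Nat.lt_div_mul_add (a := n) hq0
    rw [← hmdef] at this
    linarith
  have hmqR : (m : ℝ) * q ≤ n := by exact_mod_cast hmq
  have hmqR' : (n : ℝ) < (m + 1) * q := by exact_mod_cast hmq'
  have hm1 : (1 : ℝ) ≤ m := by exact_mod_cast hm0
  have hn2 : (n : ℝ) ≤ 2 * q * m := by nlinarith
  have hL4 : 4 * L ≤ m := by
    have hlog : 0 ≤ Real.log n := Real.log_nonneg (by exact_mod_cast hn1)
    have hLle : (L : ℝ) ≤ Real.log n / 10 := Nat.floor_le (by positivity)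
    rw [abs_of_nonneg hlog, abs_of_nonneg hnR.le] at h5
    have : 1 / (q : ℝ) * n ≤ 2 * m := by
      rw [one_div, inv_mul_le_iff₀ hqR]
      linarith
    have : (4 * L : ℝ) ≤ m := by linarith
    exact_mod_cast this
  set N₀ : ℕ := m / D with hN₀def
  have hN₀1 : 1 ≤ N₀ := (Nat.one_le_div_iff hD).2 hDm
  have hNw : 2 * (N₀ * κ₀ ^ s) ≤ m := by
    have := Nat.div_mul_le_self m D
    rw [← hN₀def, hDdef] at this
    linarith
  have hN₀C : n / C ≤ N₀ := by
    have := Nat.lt_div_mul_add (a := m) hD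
    rw [← hN₀def] at this
    have h' : (m : ℝ) < N₀ * D + D := by exact_mod_cast this
    have hDR : (1 : ℝ) ≤ D := by exact_mod_cast hD
    have hN1 : (1 : ℝ) ≤ N₀ := by exact_mod_cast hN₀1
    rw [div_le_iff₀ (by linarith), hCdef]
    have hm2 : (m : ℝ) ≤ 2 * (N₀ * D) := by nlinarith
    have := mul_le_mul_of_nonneg_left hm2 (show 0 ≤ 2 * (q : ℝ) by positivity)
    linarith
  have hm172 : m * 172 ≤ n :=
    (Nat.mul_le_mul_left m (show 172 ≤ q by exact_mod_cast hq172)).trans hmq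
  obtain ⟨f, hf⟩ : ∃ f, L + 3 * L + m + f + 20 * m + 63 * m = n :=
    ⟨n - (4 * L + 84 * m), by omega⟩
  have ha₀ : (1 - ε / 2) * n ≤ ((f - m : ℕ) : ℝ) := by
    have hge : n ≤ (f - m) + 86 * m := by omega
    have hge' : (n : ℝ) ≤ ((f - m : ℕ) : ℝ) + 86 * m := by exact_mod_cast hge
    rw [div_le_iff₀ hε] at hqε
    have : 172 * (m : ℝ) ≤ ε * n := by nlinarith
    linarith
  have hκ : 1 + 16 * (n : ℝ) / (m * τ) ≤ κ₀ := by
    refine le_trans ?_ hκ₀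
    have : 16 * (n : ℝ) / (m * τ) ≤ 32 * q / τ := by
      rw [div_le_div_iff₀ (by positivity) hτ]
      have := mul_le_mul_of_nonneg_right hn2 hτ.le
      linarith
    linarith
  have hfail := four_phases hXY (by omega) (w := m) (f := f) (N₂ := 20 * m) (N₃ := 63 * m)
    (j := m) (by rw [hXc, hYc]; exact hf) hm0 hτ hτ1 hκ hN₀1 hNw hβ hβη
    (μ := (n : ℝ) ^ ((1 - ε) * n / 2) * 2 ^ n) (by positivity)
    (heavy_bound hC h4 h3 hN₀C ha₀)
  rw [mul_div_assoc, div_self (by positivity), mul_one, hXc, hYc] at hfail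
  have herr := error_terms hβdef (show n ≤ q * (m + 1) by linarith) (show L ≤ m by omega)
    (show L ≤ n by omega)
  push_cast at hfail
  have hr := rpow_ge_of_floor_log hn1
  rw [← hLdef] at hr
  have hop := one_sub_prob (n := n) fun M => ∃ B : Finset (Fin n), B.card = n - L ∧ Yᶜ ⊆ B ∧
    (n : ℝ) ^ ((1 - ε) * n / 2) ≤ |permOn M Xᶜ B|
  linarith
end
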